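/- arXiv:2605.10883 — 6 statements merged into one kernel-verified Lean document; each statement's English description precedes it below -/
import Mathlib

section
/- Let a, b be integers with b > a ≥ 2. The edge-condition system f₁(α₁,β₁) = 0, f₂(α₁,β₁) = 0 has a solution (α₁,β₁) ∈ D with 0 < α₁ < π/a and 0 < β₁ < π/b if and only if (1 + cos(π/a))·sin(2π/b) > (cos(π/a) + cos(2π/b))·sin(π/a); moreover, when this inequality holds the solution of the system in D is unique. -/
open Real

/-- `B₀₀ = 1 − cos²α₁ − cos²α₂ − cos²β₁ − 2·cos α₁·cos α₂·cos β₁` with `α₂ = 2π/a − 2α₁`. -/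
noncomputable def B00 (a : ℤ) (α₁ β₁ : ℝ) : ℝ :=
  1 - cos α₁ ^ 2 - cos (2 * π / (a : ℝ) - 2 * α₁) ^ 2 - cos β₁ ^ 2
    - 2 * cos α₁ * cos (2 * π / (a : ℝ) - 2 * α₁) * cos β₁

/-- `B₁₁ = 1 − cos²α₁ − cos²β₁ − cos²β₂ − 2·cos α₁·cos β₁·cos β₂` with `β₂ = 2π/b − 2β₁`. -/
noncomputable def B11 (b : ℤ) (α₁ β₁ : ℝ) : ℝ :=
  1 - cos α₁ ^ 2 - cos β₁ ^ 2 - cos (2 * π / (b : ℝ) - 2 * β₁) ^ 2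
    - 2 * cos α₁ * cos β₁ * cos (2 * π / (b : ℝ) - 2 * β₁)

/-- `f₁(α₁,β₁) = B₀₀·sin²β₁ − B₁₁·sin²α₂`. -/
noncomputable def f1 (a b : ℤ) (α₁ β₁ : ℝ) : ℝ :=
  B00 a α₁ β₁ * sin β₁ ^ 2 - B11 b α₁ β₁ * sin (2 * π / (a : ℝ) - 2 * α₁) ^ 2

/-- `f₂(α₁,β₁) = B₁₁·sin²α₁ − B₀₀·sin²β₂`. -/
noncomputable def f2 (a b : ℤ) (α₁ β₁ : ℝ) : ℝ :=
  B11 b α₁ β₁ * sin α₁ ^ 2 - B00 a α₁ β₁ * sin (2 * π / (b : ℝ) - 2 * β₁) ^ 2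

/-- The `α₁`-interval of the domain `D`. -/
noncomputable def alphaI (a : ℤ) : Set ℝ :=
  if a = 2 then Set.Icc (π / 3) (π / 2)
  else if a = 3 then Set.Icc (π / 12) (π / 3)
  else Set.Icc 0 (π / (a : ℝ))

/-- The domain `D ⊂ ℝ²`. -/
noncomputable def Dom (a b : ℤ) : Set (ℝ × ℝ) :=
  alphaI a ×ˢ Set.Icc 0 (π / (b : ℝ))


lemma Ga_pos (α p β q : ℝ) (hp : 0 < p) (hpα : p ≤ α) (hα : α ≤ π/3) (hβ : 0 ≤ β) (hβq : β ≤ q)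
    (hq : 2*β+q ≤ π/2) (hβα : β ≤ α) :
    0 < -cos (2*α) + sin α * sin (p-β) + 2*cos α*cos (p-β) - cos β*cos (q-α) + 2*cos (p-q) := by
  have hpi := pi_pos
  have h1 : cos β * cos (q-α) ≤ 1 := by
    nlinarith [cos_le_one β, cos_le_one (q-α), neg_one_le_cos β, neg_one_le_cos (q-α)]
  have hcα : 0 < cos α := cos_pos_of_mem_Ioo ⟨by linarith, by linarith⟩
  have hsα : 0 ≤ sin α := sin_nonneg_of_nonneg_of_le_pi (by linarith) (by linarith)
  have h2 : cos α ≤ cos (p-β) := by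
    rw [← cos_abs (p-β)]
    apply cos_le_cos_of_nonneg_of_le_pi (abs_nonneg _) (by linarith)
    rw [abs_le]; constructor <;> linarith
  have h3 : cos (2*α) = 2*cos α^2 - 1 := cos_two_mul α
  have h4 : 0 ≤ cos α * (cos (p-β) - cos α) := mul_nonneg hcα.le (by linarith)
  suffices 0 < sin α * sin (p-β) + 2 * cos (p-q) by nlinarith
  rcases le_or_gt β p with h | h
  · have : 0 ≤ sin (p-β) := sin_nonneg_of_nonneg_of_le_pi (by linarith) (by linarith)
    have : 0 < cos (p-q) := cos_pos_of_mem_Ioo ⟨by linarith, by linarith⟩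
    have := mul_nonneg hsα ‹0 ≤ sin (p-β)›
    linarith
  · have e1 : sin (p-β) = - sin (β-p) := by rw [← sin_neg]; ring_nf
    have e2 : 0 ≤ sin (β-p) := sin_nonneg_of_nonneg_of_le_pi (by linarith) (by linarith)
    have e3 : sin (β-p) ≤ sin β := sin_le_sin_of_le_of_le_pi_div_two (by linarith) (by linarith) (by linarith)
    have e4 : cos (p-q) = cos (q-p) := by rw [← cos_neg]; ring_nf
    have e5 : cos (π/2-2*β) ≤ cos (q-p) :=
      cos_le_cos_of_nonneg_of_le_pi (by linarith) (by linarith) (by linarith)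
    rw [cos_pi_div_two_sub, sin_two_mul] at e5
    have e6 : 1/2 < cos β := by
      rw [← cos_pi_div_three]
      exact cos_lt_cos_of_nonneg_of_le_pi (by linarith) (by linarith) (by linarith)
    have e7 : 0 < sin β := sin_pos_of_pos_of_lt_pi (by linarith) (by linarith)
    have e8 : sin α * sin (β-p) ≤ sin (β-p) := by nlinarith [sin_le_one α]
    rw [e1, e4]
    nlinarith

lemma Gb_I (α p β q : ℝ) (hp : 0 ≤ p) (hpα : p ≤ α) (hα : α ≤ π/3) (hβ : 0 ≤ β) (hβq : β ≤ q)
    (hqα : q ≤ α) :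
    0 ≤ -cos (2*β) - cos α*cos (p-β) + sin β*sin (q-α) + 2*cos β*cos (q-α) + 2*cos (p-q) := by
  have hpi := pi_pos
  have hcα : 0 < cos α := cos_pos_of_mem_Ioo ⟨by linarith, by linarith⟩
  have hcβ : 0 < cos β := cos_pos_of_mem_Ioo ⟨by linarith, by linarith⟩
  have h1 : cos β * cos (q-α) + sin β * sin (q-α) = cos (α - q + β) := by
    have : α - q + β = β - (q - α) := by ring
    rw [this, cos_sub β (q-α)]
  have h2 : cos α ≤ cos (α - q + β) := 
    cos_le_cos_of_nonneg_of_le_pi (by linarith) (by linarith) (by linarith)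
  have h3 : cos α ≤ cos (q-α) := by
    rw [← cos_neg (q-α)]
    exact cos_le_cos_of_nonneg_of_le_pi (by linarith) (by linarith) (by linarith)
  have h4 : 1/2 ≤ cos (p-q) := by
    rw [← cos_pi_div_three, ← cos_abs (p-q)]
    apply cos_le_cos_of_nonneg_of_le_pi (abs_nonneg _) (by linarith)
    rw [abs_le]; constructor <;> linarith
  have h5 := cos_le_one (2*β)
  have h6 : cos α * cos (p-β) ≤ cos α := by nlinarith [cos_le_one (p-β)]
  nlinarith

lemma Gb_II (α p β q : ℝ) (hβ : 0 ≤ β) (hβ' : β ≤ π/2)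
    (hα : 0 ≤ α) (hα' : α ≤ π/2) (hqα : α ≤ q) (hq : q ≤ π) 
    (h : 0 ≤ 2*cos (q-α) + 2*cos (q-p) - 1 - cos α) :
    0 ≤ -cos (2*β) - cos α*cos (p-β) + sin β*sin (q-α) + 2*cos β*cos (q-α) + 2*cos (p-q) := by
  have hpi := pi_pos
  have hcα : 0 ≤ cos α := cos_nonneg_of_mem_Icc ⟨by linarith, by linarith⟩
  have hcβ : 0 ≤ cos β := cos_nonneg_of_mem_Icc ⟨by linarith, by linarith⟩
  have h6 : cos α * cos (p-β) ≤ cos α := by nlinarith [cos_le_one (p-β)]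
  have h7 : 0 ≤ sin β*sin (q-α) := mul_nonneg (sin_nonneg_of_nonneg_of_le_pi (by linarith) (by linarith))
    (sin_nonneg_of_nonneg_of_le_pi (by linarith) (by linarith))
  have h8 := cos_two_mul β
  have e4 : cos (p-q) = cos (q-p) := by rw [← cos_neg]; ring_nf
  have h9 : 0 ≤ (1-cos β)*(1+cos β-cos (q-α)) :=
    mul_nonneg (by linarith [cos_le_one β]) (by linarith [cos_le_one (q-α)])
  rw [e4]
  nlinarith

/-- a = 3 -/
lemma Phi3 (α p q : ℝ) (hp : 0 ≤ p) (hpα : p ≤ α) (hαp : 2*α + p = 2*(π/3)) (hαq : α ≤ q) (hq : q ≤ π/2) :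
    0 ≤ 2*cos (q-α) + 2*cos (q-p) - 1 - cos α := by
  have hpi := pi_pos
  have h1 : sin α ≤ cos (q-α) := by
    rw [← cos_pi_div_two_sub]
    exact cos_le_cos_of_nonneg_of_le_pi (by linarith) (by linarith) (by linarith)
  have h2 : sin p ≤ cos (q-p) := by
    rw [← cos_pi_div_two_sub]
    exact cos_le_cos_of_nonneg_of_le_pi (by linarith) (by linarith) (by linarith)
  obtain ⟨w, hw⟩ : ∃ w, w = π/3 - α := ⟨_, rfl⟩
  have e1 : α = π/3 - w := by linarith
  have e2 : p = 2*w := by linarith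
  have h3 : √3/2 ≤ cos w := by
    rw [← cos_pi_div_six]
    exact cos_le_cos_of_nonneg_of_le_pi (by linarith) (by linarith) (by linarith)
  have h4 : 0 ≤ sin w := sin_nonneg_of_nonneg_of_le_pi (by linarith) (by linarith)
  rw [e1, sin_sub, cos_pi_div_three, sin_pi_div_three] at h1
  rw [e2, sin_two_mul] at h2
  have h5 : cos α = 1/2*cos w + √3/2*sin w := by
    rw [e1, cos_sub, cos_pi_div_three, sin_pi_div_three]
  rw [← e1] at h1; rw [← e2] at h2
  have s1 : (1.73:ℝ) ≤ √3 := by apply le_sqrt_of_sq_le; norm_num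
  have s2 : √3 ≤ (1.74:ℝ) := by rw [sqrt_le_left (by norm_num)]; norm_num
  have s3 : √3^2 = 3 := sq_sqrt (by norm_num)
  have h6 : 0 ≤ sin w * (cos w - √3/2) := mul_nonneg h4 (by linarith)
  have h7 : 0 ≤ (cos w - √3/2) * (√3 - 1/2) := mul_nonneg (by linarith) (by linarith)
  have h8 : 0 ≤ sin w * (√3/2 - 1) + sin w * 1 := by nlinarith
  nlinarith

lemma Phi4 (α p q : ℝ) (hp : 0 ≤ p) (hpα : p ≤ α) (hαp : 2*α + p = 2*(π/4)) (hαq : α ≤ q) (hq : q ≤ 2*(π/5)) :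
    0 ≤ 2*cos (q-α) + 2*cos (q-p) - 1 - cos α := by
  have hpi := pi_pos
  have h1 : √2/2 ≤ cos (q-α) := by
    rw [← cos_pi_div_four]
    exact cos_le_cos_of_nonneg_of_le_pi (by linarith) (by linarith) (by linarith)
  have h2 : cos (2*(π/5)) ≤ cos (q-p) := 
    cos_le_cos_of_nonneg_of_le_pi (by linarith) (by linarith) (by linarith)
  have h3 : cos α ≤ √3/2 := by
    rw [← cos_pi_div_six]
    exact cos_le_cos_of_nonneg_of_le_pi (by linarith) (by linarith) (by linarith)
  rw [cos_two_mul, cos_pi_div_five] at h2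
  have s1 : (1.41:ℝ) ≤ √2 := by apply le_sqrt_of_sq_le; norm_num
  have s2 : √3 ≤ (1.74:ℝ) := by rw [sqrt_le_left (by norm_num)]; norm_num
  have s3 : (2.2:ℝ) ≤ √5 := by apply le_sqrt_of_sq_le; norm_num
  nlinarith

lemma Phi5 (α p q : ℝ) (hp : 0 ≤ p) (hpα : p ≤ α) (hα : α ≤ π/5) (hαq : α ≤ q) (hq : q ≤ π/3) :
    0 ≤ 2*cos (q-α) + 2*cos (q-p) - 1 - cos α := by
  have hpi := pi_pos
  have h1 : cos (π/3-α) ≤ cos (q-α) := 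
    cos_le_cos_of_nonneg_of_le_pi (by linarith) (by linarith) (by linarith)
  have h2 : cos (π/3) ≤ cos (q-p) := 
    cos_le_cos_of_nonneg_of_le_pi (by linarith) (by linarith) (by linarith)
  rw [cos_sub] at h1
  rw [cos_pi_div_three, sin_pi_div_three] at h1
  rw [cos_pi_div_three] at h2
  have h4 : 0 ≤ sin α := sin_nonneg_of_nonneg_of_le_pi (by linarith) (by linarith)
  nlinarith [mul_nonneg (sqrt_nonneg 3) h4]

/-- a = 2: monotonicity of E2 in α -/
lemma E2a_neg (w β q : ℝ) (hw : 0 < w) (hw' : w ≤ π/6) (hq : 0 < q) (hq' : q < π) :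
    -cos (2*w) + cos β * sin (q+w) - 2*sin (2*w)*sin q < 0 := by
  have hpi := pi_pos
  have hs : sin w ≤ 1/2 := by
    rw [← sin_pi_div_six]
    exact sin_le_sin_of_le_of_le_pi_div_two (by linarith) (by linarith) (by linarith)
  have hs0 : 0 < sin w := sin_pos_of_pos_of_lt_pi hw (by linarith)
  have hc : 0 < cos w := cos_pos_of_mem_Ioo ⟨by linarith, by linarith⟩
  have hsq : 0 < sin q := sin_pos_of_pos_of_lt_pi hq hq'
  have h1 : cos (2*w) = 1 - 2*sin w^2 := by rw [cos_two_mul]; nlinarith [sin_sq_add_cos_sq w]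
  have h2 := sin_two_mul w
  have h3 := sin_add q w
  have hc1 := cos_le_one w
  have hq1 := sin_le_one q
  have hcb := cos_le_one β
  have hcb' := neg_one_le_cos β
  have hcq := cos_le_one q
  rcases le_or_gt 0 (sin (q+w)) with h0 | h0
  · have h4 : cos β * sin (q+w) ≤ sin (q+w) := by nlinarith
    have h5 : sin (q+w) ≤ sin q * cos w + sin w := by nlinarith
    rw [h1, h2]
    rcases le_or_gt (1/4) (sin w) with h | h
    · nlinarith [mul_nonneg (mul_pos hsq hc).le (by linarith : 0 ≤ 4*sin w - 1)]
    · have : sin q * cos w * (1-4*sin w) ≤ 1*(1-4*sin w) := 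
        mul_le_mul_of_nonneg_right (by nlinarith) (by linarith)
      nlinarith
  · have h4 : cos β * sin (q+w) ≤ - sin (q+w) := by nlinarith
    have h5 : - sin (q+w) < sin w := by nlinarith [neg_one_le_cos q, mul_pos hsq hc]
    rw [h1, h2]
    nlinarith [mul_pos (mul_pos hs0 hc) hsq]

/-- a = 2: monotonicity of E2 in β -/
lemma E2b_nonneg (α p w β q : ℝ) (hαw : α = π/2 - w) (hpw : p = 2*w) (hw : 0 ≤ w) (hw' : w ≤ π/6)
    (hβ : 0 ≤ β) (hβq : β ≤ q) (hq : 2*β + q ≤ 2*(π/3)) :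
    0 ≤ sin β * sin (q-α) + 2*cos β*cos (q-α) + 2*cos p*cos q := by
  have hpi := pi_pos
  have hcβ : 0 ≤ cos β := cos_nonneg_of_mem_Icc ⟨by linarith, by linarith⟩
  have hsβ : 0 ≤ sin β := sin_nonneg_of_nonneg_of_le_pi (by linarith) (by linarith)
  have hcp : 1/2 ≤ cos p := by
    rw [← cos_pi_div_three]
    exact cos_le_cos_of_nonneg_of_le_pi (by linarith) (by linarith) (by linarith)
  rcases le_or_gt q α with h | h
  · have e1 : sin (q-α) = - sin (α-q) := by rw [← sin_neg]; ring_nf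
    have e2 : cos (q-α) = cos (α-q) := by rw [← cos_neg]; ring_nf
    have e3 : 0 ≤ sin (α-q) := sin_nonneg_of_nonneg_of_le_pi (by linarith) (by linarith)
    have e4 : 0 ≤ cos (α-q) := cos_nonneg_of_mem_Icc ⟨by linarith, by linarith⟩
    have e5 : cos q = cos α * cos (α-q) + sin α * sin (α-q) := by
      rw [← cos_sub]; ring_nf
    have e6 : 0 ≤ cos α := cos_nonneg_of_mem_Icc ⟨by linarith, by linarith⟩
    have e7 : √3/2 ≤ sin α := by
      rw [← sin_pi_div_three]
      exact sin_le_sin_of_le_of_le_pi_div_two (by linarith) (by linarith) (by linarith)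
    have e8 : sin β ≤ √3/2 := by
      rw [← sin_pi_div_three]
      exact sin_le_sin_of_le_of_le_pi_div_two (by linarith) (by linarith) (by linarith)
    have e9 : sin β * sin (α-q) ≤ cos q := by
      have := mul_nonneg e6 e4
      have := mul_le_mul_of_nonneg_right (e8.trans e7) e3
      linarith
    have e10 : 0 ≤ cos q := by
      have := mul_nonneg hsβ e3
      linarith
    rw [e1, e2]
    have := mul_nonneg hcβ e4
    nlinarith
  have h7 : 0 ≤ sin β*sin (q-α) := mul_nonneg hsβ
    (sin_nonneg_of_nonneg_of_le_pi (by linarith) (by linarith))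
  rcases le_or_gt q (π/2) with h1 | h1
  · have e4 : 0 ≤ cos (q-α) := cos_nonneg_of_mem_Icc ⟨by linarith, by linarith⟩
    have e5 : 0 ≤ cos q := cos_nonneg_of_mem_Icc ⟨by linarith, by linarith⟩
    have := mul_nonneg hcβ e4
    have := mul_nonneg (by linarith : 0 ≤ cos p) e5
    linarith
  have k1 : √3/2 ≤ cos β := by
    rw [← cos_pi_div_six]
    exact cos_le_cos_of_nonneg_of_le_pi (by linarith) (by linarith) (by linarith)
  have k2 : -(1/2) ≤ cos q := by
    have : cos (π - π/3) = -(1/2) := by rw [cos_pi_sub, cos_pi_div_three]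
    rw [← this]
    exact cos_le_cos_of_nonneg_of_le_pi (by linarith) (by linarith) (by linarith)
  have k3 : -(cos p/2) ≤ cos p * cos q := by nlinarith
  have s1 : (1.41:ℝ) ≤ √2 := by apply le_sqrt_of_sq_le; norm_num
  have s2 : (1.73:ℝ) ≤ √3 := by apply le_sqrt_of_sq_le; norm_num
  rcases le_or_gt w (π/12) with h2 | h2
  · have k4 : √2/2 ≤ cos (q-α) := by
      rw [← cos_pi_div_four]
      exact cos_le_cos_of_nonneg_of_le_pi (by linarith) (by linarith) (by linarith)
    have k5 := cos_le_one p
    nlinarith [mul_le_mul k1 k4 (by positivity) hcβ]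
  · have k4 : 1/2 ≤ cos (q-α) := by
      rw [← cos_pi_div_three]
      exact cos_le_cos_of_nonneg_of_le_pi (by linarith) (by linarith) (by linarith)
    have k5 : cos p ≤ √3/2 := by
      rw [← cos_pi_div_six]
      exact cos_le_cos_of_nonneg_of_le_pi (by linarith) (by linarith) (by linarith)
    nlinarith [mul_le_mul k1 k4 (by positivity) hcβ]

/-- a = 2: monotonicity of P in β -/
lemma Pb2_pos (α p w β q : ℝ) (hαw : α = π/2 - w) (hpw : p = 2*w) (hw : 0 ≤ w) (hw' : w ≤ π/6)
    (hβ : 0 < β) (hβq : β ≤ q) (hq : 2*β + q ≤ 2*(π/3)) :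
    0 < sin α * cos β + 2 * sin p * cos q := by
  have hpi := pi_pos
  have hcβ : 0 < cos β := cos_pos_of_mem_Ioo ⟨by linarith, by linarith⟩
  have hsβ : 0 < sin β := sin_pos_of_pos_of_lt_pi (by linarith) (by linarith)
  have hcw : 0 < cos w := cos_pos_of_mem_Ioo ⟨by linarith, by linarith⟩
  have hsw : 0 ≤ sin w := sin_nonneg_of_nonneg_of_le_pi (by linarith) (by linarith)
  have hs : sin w ≤ 1/2 := by
    rw [← sin_pi_div_six]
    exact sin_le_sin_of_le_of_le_pi_div_two (by linarith) (by linarith) (by linarith)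
  rw [hαw, hpw, sin_pi_div_two_sub, sin_two_mul]
  have : 0 < cos β + 4 * sin w * cos q := by
    rcases le_or_gt 0 (cos q) with h | h
    · positivity
    · have h1 : cos (π - (π/3+β)) ≤ cos q :=
        cos_le_cos_of_nonneg_of_le_pi (by linarith) (by linarith) (by linarith)
      rw [cos_pi_sub, cos_add, cos_pi_div_three, sin_pi_div_three] at h1
      have : 0 < √3 * sin β := by positivity
      nlinarith
  nlinarith [mul_pos hcw this]

/-- Uniqueness, corner positivity and existence for the system `P = G = 0`. -/
def Concl (x y : ℝ) (P G : ℝ → ℝ → ℝ) : Prop :=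
    (∀ α ∈ Set.Icc (2*x/3) x, ∀ β ∈ Set.Icc 0 (2*y/3), ∀ α' ∈ Set.Icc (2*x/3) x,
      ∀ β' ∈ Set.Icc 0 (2*y/3), P α β = 0 → G α β = 0 → P α' β' = 0 → G α' β' = 0 →
      α = α' ∧ β = β') ∧
    (∀ α ∈ Set.Icc (2*x/3) x, ∀ β ∈ Set.Icc 0 (2*y/3), P α β = 0 → G α β = 0 → α < x →
      0 < G x 0) ∧
    (0 < G x 0 → ∃ α ∈ Set.Icc (2*x/3) x, ∃ β ∈ Set.Icc 0 (2*y/3), P α β = 0 ∧ G α β = 0 ∧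
      α < x ∧ 0 < β)

lemma core (x y : ℝ) (hx : 0 < x) (hy : 0 < y) (P G : ℝ → ℝ → ℝ)
    (hPc : Continuous fun p : ℝ × ℝ => P p.1 p.2) (hGc : Continuous fun p : ℝ × ℝ => G p.1 p.2)
    (hPa : ∀ β ∈ Set.Icc 0 (2*y/3), StrictMonoOn (fun α => P α β) (Set.Icc (2*x/3) x))
    (hPb : ∀ α ∈ Set.Icc (2*x/3) x, StrictMonoOn (fun β => P α β) (Set.Icc 0 (2*y/3)))
    (hGa : ∀ β ∈ Set.Icc 0 (2*y/3), StrictMonoOn (fun α => G α β) (Set.Icc (2*x/3) x))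
    (hGb : ∀ α ∈ Set.Icc (2*x/3) x, AntitoneOn (fun β => G α β) (Set.Icc 0 (2*y/3)))
    (hP0 : P x 0 = 0) (hP1 : P (2*x/3) (2*y/3) = 0) (hG1 : G (2*x/3) (2*y/3) < 0) :
    Concl x y P G := by
  have hxI : x ∈ Set.Icc (2*x/3) x := ⟨by linarith, le_rfl⟩
  have hxI' : 2*x/3 ∈ Set.Icc (2*x/3) x := ⟨le_rfl, by linarith⟩
  have hyI : (0:ℝ) ∈ Set.Icc 0 (2*y/3) := ⟨le_rfl, by linarith⟩
  have hyI' : 2*y/3 ∈ Set.Icc 0 (2*y/3) := ⟨by linarith, le_rfl⟩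
  have key : ∀ α ∈ Set.Icc (2*x/3) x, ∀ β ∈ Set.Icc 0 (2*y/3), ∀ α' ∈ Set.Icc (2*x/3) x,
      ∀ β' ∈ Set.Icc 0 (2*y/3), P α β = 0 → P α' β' = 0 → α < α' → β' < β ∧ G α β < G α' β' := by
    intro α hα β hβ α' hα' β' hβ' h1 h2 hlt
    have h3 : P α β < P α' β := hPa β hβ hα hα' hlt
    have h4 : β' < β := by
      by_contra hcon
      have : P α' β ≤ P α' β' := (hPb α' hα').monotoneOn hβ hβ' (not_lt.mp hcon)
      linarith
    have h5 : G α β < G α' β := hGa β hβ hα hα' hlt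
    have h6 : G α' β ≤ G α' β' := hGb α' hα' hβ' hβ h4.le
    exact ⟨h4, by linarith⟩
  refine ⟨?_, ?_, ?_⟩
  · intro α hα β hβ α' hα' β' hβ' h1 g1 h2 g2
    have e : α = α' := by
      rcases lt_trichotomy α α' with h | h | h
      · have := (key α hα β hβ α' hα' β' hβ' h1 h2 h).2; linarith
      · exact h
      · have := (key α' hα' β' hβ' α hα β hβ h2 h1 h).2; linarith
    subst e
    exact ⟨rfl, (hPb α hα).injOn hβ hβ' (by simp only [h1, h2])⟩
  · intro α hα β hβ h1 g1 hlt
    have := (key α hα β hβ x hxI 0 hyI h1 hP0 hlt).2; linarith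
  · intro hG0
    have hK : IsCompact (Set.Icc (2*x/3) x ×ˢ Set.Icc 0 (2*y/3)) := isCompact_Icc.prod isCompact_Icc
    let S : Set ℝ := Prod.fst '' ((Set.Icc (2*x/3) x ×ˢ Set.Icc 0 (2*y/3)) ∩
      ({p : ℝ × ℝ | P p.1 p.2 = 0} ∩ {p : ℝ × ℝ | G p.1 p.2 ≤ 0}))
    let T : Set ℝ := Prod.fst '' ((Set.Icc (2*x/3) x ×ˢ Set.Icc 0 (2*y/3)) ∩
      ({p : ℝ × ℝ | P p.1 p.2 = 0} ∩ {p : ℝ × ℝ | 0 ≤ G p.1 p.2}))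
    have hS : IsClosed S := ((hK.inter_right ((isClosed_eq hPc continuous_const).inter
      (isClosed_le hGc continuous_const))).image continuous_fst).isClosed
    have hT : IsClosed T := ((hK.inter_right ((isClosed_eq hPc continuous_const).inter
      (isClosed_le continuous_const hGc))).image continuous_fst).isClosed
    have hcov : Set.Icc (2*x/3) x ⊆ S ∪ T := by
      intro α hα
      have h0 : P α 0 ≤ 0 := by
        have h := (hPa 0 hyI).monotoneOn hα hxI hα.2
        linarith
      have h1 : 0 ≤ P α (2*y/3) := by
        have h := (hPa _ hyI').monotoneOn hxI' hα hα.1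
        linarith
      have hc : ContinuousOn (fun β => P α β) (Set.Icc 0 (2*y/3)) :=
        (hPc.comp (Continuous.prodMk_right α)).continuousOn
      obtain ⟨β, hβ, hβ0⟩ := intermediate_value_Icc (by linarith : (0:ℝ) ≤ 2*y/3) hc ⟨h0, h1⟩
      rcases le_total (G α β) 0 with h | h
      · exact Or.inl ⟨(α, β), ⟨⟨hα, hβ⟩, hβ0, h⟩, rfl⟩
      · exact Or.inr ⟨(α, β), ⟨⟨hα, hβ⟩, hβ0, h⟩, rfl⟩
    have hcon := isPreconnected_closed_iff.mp (isPreconnected_Icc (a := 2*x/3) (b := x)) S T hS hT hcov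
      ⟨2*x/3, hxI', (2*x/3, 2*y/3), ⟨⟨hxI', hyI'⟩, hP1, hG1.le⟩, rfl⟩
      ⟨x, hxI, (x, 0), ⟨⟨hxI, hyI⟩, hP0, hG0.le⟩, rfl⟩
    obtain ⟨α, hα, ⟨⟨a1, β⟩, ⟨⟨_, hβ⟩, hPβ, hGβ⟩, rfl⟩, ⟨⟨a2, β'⟩, ⟨⟨_, hβ'⟩, hPβ', hGβ'⟩, h2⟩⟩ := hcon
    simp only [Set.mem_ofPred_eq] at *
    subst h2
    have hbb : β = β' := (hPb a2 hα).injOn hβ hβ' (by simp only [hPβ, hPβ'])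
    subst hbb
    have hG : G a2 β = 0 := le_antisymm hGβ hGβ'
    have hlt : a2 < x := by
      rcases hα.2.lt_or_eq with h | h
      · exact h
      · subst h
        have : β = 0 := (hPb a2 hα).injOn hβ hyI (by simp only [hPβ, hP0])
        subst this; linarith
    refine ⟨a2, hα, β, hβ, hPβ, hG, hlt, ?_⟩
    exact (key a2 hα β hβ x hxI 0 hyI hPβ hP0 hlt).1


noncomputable def Pf (x y α β : ℝ) : ℝ := sin α * sin β - sin (2*x-2*α) * sin (2*y-2*β)
noncomputable def E1f (x y α β : ℝ) : ℝ :=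
  (cos β + cos α * cos (2*x-2*α)) * sin β - (cos (2*y-2*β) + cos α * cos β) * sin (2*x-2*α)
noncomputable def E2f (x y α β : ℝ) : ℝ :=
  (cos α + cos β * cos (2*y-2*β)) * sin α - (cos (2*x-2*α) + cos α * cos β) * sin (2*y-2*β)

lemma Pf_cont (x y : ℝ) : Continuous fun p : ℝ × ℝ => Pf x y p.1 p.2 := by
  unfold Pf; fun_prop
lemma E1f_cont (x y : ℝ) : Continuous fun p : ℝ × ℝ => E1f x y p.1 p.2 := by
  unfold E1f; fun_prop
lemma E2f_cont (x y : ℝ) : Continuous fun p : ℝ × ℝ => E2f x y p.1 p.2 := by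
  unfold E2f; fun_prop

lemma hd_lin (x α : ℝ) : HasDerivAt (fun α => 2*x-2*α) (-2) α := by
  simpa using ((hasDerivAt_id α).const_mul 2).const_sub (2*x)

lemma hd_c2 (x α : ℝ) : HasDerivAt (fun α => cos (2*x-2*α)) (2 * sin (2*x-2*α)) α := by
  convert (hd_lin x α).cos using 1; ring
lemma hd_s2 (x α : ℝ) : HasDerivAt (fun α => sin (2*x-2*α)) (-2 * cos (2*x-2*α)) α := by
  convert (hd_lin x α).sin using 1; ring

lemma Pf_da (x y α β : ℝ) : HasDerivAt (fun α => Pf x y α β)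
    (cos α * sin β + 2 * cos (2*x-2*α) * sin (2*y-2*β)) α := by
  simp only [Pf]
  refine HasDerivAt.congr_deriv (((hasDerivAt_sin α).mul_const (sin β)).sub ((hd_s2 x α).mul_const (sin (2*y-2*β)))) ?_
  ring
lemma Pf_db (x y α β : ℝ) : HasDerivAt (fun β => Pf x y α β)
    (sin α * cos β + 2 * sin (2*x-2*α) * cos (2*y-2*β)) β := by
  simp only [Pf]
  refine HasDerivAt.congr_deriv (((hasDerivAt_sin β).const_mul (sin α)).sub ((hd_s2 y β).const_mul (sin (2*x-2*α)))) ?_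
  ring

lemma E1f_da (x y α β : ℝ) : HasDerivAt (fun α => E1f x y α β)
    (sin α * sin (2*x-2*α-β) + 2*cos α*cos (2*x-2*α-β) + 2*cos (2*y-2*β)*cos (2*x-2*α)) α := by
  unfold E1f
  refine HasDerivAt.congr_deriv (((((hasDerivAt_cos α).mul (hd_c2 x α)).const_add (cos β)).mul_const (sin β)).sub
    ((((hasDerivAt_cos α).mul_const (cos β)).const_add (cos (2*y-2*β))).mul (hd_s2 x α))) ?_
  rw [sin_sub (2*x-2*α) β, cos_sub (2*x-2*α) β]
  ring
lemma E1f_db (x y α β : ℝ) : HasDerivAt (fun β => E1f x y α β)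
    (cos (2*β) + cos α*cos (2*x-2*α-β) - 2*sin (2*y-2*β)*sin (2*x-2*α)) β := by
  unfold E1f
  refine HasDerivAt.congr_deriv ((((hasDerivAt_cos β).add_const (cos α * cos (2*x-2*α))).mul (hasDerivAt_sin β)).sub
    (((hd_c2 y β).add ((hasDerivAt_cos β).const_mul (cos α))).mul_const (sin (2*x-2*α)))) ?_
  rw [cos_sub (2*x-2*α) β, cos_two_mul]
  linear_combination -sin_sq_add_cos_sq β
lemma E2f_symm (x y α β : ℝ) : E2f x y α β = E1f y x β α := by
  unfold E2f E1f; ring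
lemma E2f_da (x y α β : ℝ) : HasDerivAt (fun α => E2f x y α β)
    (cos (2*α) + cos β*cos (2*y-2*β-α) - 2*sin (2*x-2*α)*sin (2*y-2*β)) α := by
  simp only [E2f_symm]; exact E1f_db y x β α
lemma E2f_db (x y α β : ℝ) : HasDerivAt (fun β => E2f x y α β)
    (sin β * sin (2*y-2*β-α) + 2*cos β*cos (2*y-2*β-α) + 2*cos (2*x-2*α)*cos (2*y-2*β)) β := by
  simp only [E2f_symm]; exact E1f_da y x β α

lemma smono {f f' : ℝ → ℝ} {a b : ℝ} (h : ∀ t, HasDerivAt f (f' t) t) (hp : ∀ t, a < t → t < b → 0 < f' t) :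
    StrictMonoOn f (Set.Icc a b) := by
  apply strictMonoOn_of_deriv_pos (convex_Icc a b) (fun t _ => (h t).continuousAt.continuousWithinAt)
  intro t ht
  rw [interior_Icc] at ht
  rw [(h t).deriv]; exact hp t ht.1 ht.2
lemma anti {f f' : ℝ → ℝ} {a b : ℝ} (h : ∀ t, HasDerivAt f (f' t) t) (hp : ∀ t, a < t → t < b → f' t ≤ 0) :
    AntitoneOn f (Set.Icc a b) := by
  apply antitoneOn_of_deriv_nonpos (convex_Icc a b) (fun t _ => (h t).continuousAt.continuousWithinAt)
    (fun t _ => (h t).differentiableAt.differentiableWithinAt)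
  intro t ht
  rw [interior_Icc] at ht
  rw [(h t).deriv]; exact hp t ht.1 ht.2

/-- positivity of the α-derivative of `Pf`. -/
lemma Pa_mono (x y : ℝ) (hx : 0 < x) (hx' : x ≤ π/2) (hy : 0 < y) (hy' : y ≤ π/3) (β : ℝ)
    (hβ : β ∈ Set.Icc 0 (2*y/3)) : StrictMonoOn (fun α => Pf x y α β) (Set.Icc (2*x/3) x) := by
  have hpi := pi_pos
  obtain ⟨h1, h2⟩ := hβ
  apply smono (fun α => Pf_da x y α β)
  intro α h3 h4
  have e1 : 0 ≤ cos α := cos_nonneg_of_mem_Icc ⟨by linarith, by linarith⟩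
  have e2 : 0 ≤ sin β := sin_nonneg_of_nonneg_of_le_pi (by linarith) (by linarith)
  have e3 : 0 < cos (2*x-2*α) := cos_pos_of_mem_Ioo ⟨by linarith, by linarith⟩
  have e4 : 0 < sin (2*y-2*β) := sin_pos_of_pos_of_lt_pi (by linarith) (by linarith)
  positivity

lemma E1_corner (x y : ℝ) : E1f x y x 0 = 0 := by simp [E1f]
lemma P_corner (x y : ℝ) : Pf x y x 0 = 0 := by simp [Pf]
lemma P_corner' (x y : ℝ) : Pf x y (2*x/3) (2*y/3) = 0 := by
  have e1 : 2*x - 2*(2*x/3) = 2*x/3 := by ring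
  have e2 : 2*y - 2*(2*y/3) = 2*y/3 := by ring
  rw [Pf, e1, e2]; ring
lemma E2_corner (x y : ℝ) : E2f x y x 0 = (cos x + cos (2*y)) * sin x - (1 + cos x) * sin (2*y) := by
  simp [E2f]
lemma E2_corner' (x y : ℝ) (hy : 0 < y) (hxy : y < x) (hx' : x ≤ π/2) : 0 < E2f x y (2*x/3) (2*y/3) := by
  have hpi := pi_pos
  have e1 : 2*x - 2*(2*x/3) = 2*x/3 := by ring
  have e2 : 2*y - 2*(2*y/3) = 2*y/3 := by ring
  rw [E2f, e1, e2]
  have h1 : cos (2*x/3) < cos (2*y/3) := cos_lt_cos_of_nonneg_of_le_pi (by linarith) (by linarith) (by linarith)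
  have h2 : sin (2*y/3) < sin (2*x/3) := sin_lt_sin_of_lt_of_le_pi_div_two (by linarith) (by linarith) (by linarith)
  have h3 : 0 < cos (2*x/3) := cos_pos_of_mem_Ioo ⟨by linarith, by linarith⟩
  have h4 : 0 < sin (2*y/3) := sin_pos_of_pos_of_lt_pi (by linarith) (by linarith)
  have h5 : cos (2*x/3) + cos (2*x/3)*cos (2*y/3) ≤ cos (2*x/3) + cos (2*y/3)*cos (2*y/3) := by nlinarith
  have h6 : 0 < cos (2*x/3) + cos (2*x/3)*cos (2*y/3) := by nlinarith
  nlinarith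
lemma E1_corner' (x y : ℝ) (hy : 0 < y) (hxy : y < x) (hx' : x ≤ π/2) : E1f x y (2*x/3) (2*y/3) < 0 := by
  have hpi := pi_pos
  have e1 : 2*x - 2*(2*x/3) = 2*x/3 := by ring
  have e2 : 2*y - 2*(2*y/3) = 2*y/3 := by ring
  rw [E1f, e1, e2]
  have h1 : cos (2*x/3) < cos (2*y/3) := cos_lt_cos_of_nonneg_of_le_pi (by linarith) (by linarith) (by linarith)
  have h2 : sin (2*y/3) < sin (2*x/3) := sin_lt_sin_of_lt_of_le_pi_div_two (by linarith) (by linarith) (by linarith)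
  have h3 : 0 < cos (2*x/3) := cos_pos_of_mem_Ioo ⟨by linarith, by linarith⟩
  have h4 : 0 < sin (2*y/3) := sin_pos_of_pos_of_lt_pi (by linarith) (by linarith)
  have h5 : cos (2*y/3) + cos (2*x/3)*cos (2*x/3) ≤ cos (2*y/3) + cos (2*x/3)*cos (2*y/3) := by nlinarith
  have h6 : 0 < cos (2*y/3) + cos (2*x/3)*cos (2*x/3) := by nlinarith
  nlinarith

lemma core2 (y : ℝ) (hy : 0 < y) (hy' : y ≤ π/3) :
    Concl (π/2) y (Pf (π/2) y) (fun α β => - E2f (π/2) y α β) := by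
  have hpi := pi_pos
  refine core (π/2) y (by linarith) hy (Pf (π/2) y) (fun α β => - E2f (π/2) y α β)
    (Pf_cont _ _) (E2f_cont _ _).neg (fun β hβ => Pa_mono _ _ (by linarith) le_rfl hy hy' β hβ)
    ?_ ?_ ?_ (P_corner _ _) (P_corner' _ _) (by simpa using E2_corner' (π/2) y hy (by linarith) le_rfl)
  · intro α hα
    obtain ⟨h1, h2⟩ := hα
    apply smono (fun β => Pf_db (π/2) y α β)
    intro β h3 h4
    exact Pb2_pos α _ (π/2-α) β _ (by ring) (by ring) (by linarith) (by linarith) h3 (by linarith) (by linarith)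
  · intro β hβ
    obtain ⟨h1, h2⟩ := hβ
    apply smono (fun α => (E2f_da (π/2) y α β).neg)
    intro α h3 h4
    have := E2a_neg (π/2-α) β (2*y-2*β) (by linarith) (by linarith) (by linarith) (by linarith)
    have e1 : cos (2*α) = - cos (2*(π/2-α)) := by rw [← cos_pi_sub]; ring_nf
    have e2 : cos (2*y-2*β-α) = sin (2*y-2*β + (π/2-α)) := by
      rw [← sin_add_pi_div_two]; ring_nf
    have e3 : 2*(π/2)-2*α = 2*(π/2-α) := by ring
    rw [e1, e2, e3]
    linarith
  · intro α hα
    obtain ⟨h1, h2⟩ := hα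
    apply anti (fun β => (E2f_db (π/2) y α β).neg)
    intro β h3 h4
    have := E2b_nonneg α (2*(π/2)-2*α) (π/2-α) β (2*y-2*β) (by ring) (by ring) (by linarith) (by linarith)
      (by linarith) (by linarith) (by linarith)
    linarith

lemma core3 (x y : ℝ) (hy : 0 < y) (hxy : y < x) (hx' : x ≤ π/3) (hy' : y ≤ π/4) 
    (hΦ : ∀ α p q : ℝ, 0 ≤ p → p ≤ α → 2*α+p = 2*x → α ≤ q → q ≤ 2*y → 
      0 ≤ 2*cos (q-α) + 2*cos (q-p) - 1 - cos α) :
    Concl x y (Pf x y) (fun α β => E1f x y α β - E2f x y α β) := by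
  have hpi := pi_pos
  refine core x y (by linarith) hy (Pf x y) (fun α β => E1f x y α β - E2f x y α β)
    (Pf_cont _ _) ((E1f_cont _ _).sub (E2f_cont _ _)) 
    (fun β hβ => Pa_mono _ _ (by linarith) (by linarith) hy (by linarith) β hβ)
    ?_ ?_ ?_ (P_corner _ _) (P_corner' _ _) (by linarith [E2_corner' x y hy hxy (by linarith), E1_corner' x y hy hxy (by linarith)])
  · intro α hα
    obtain ⟨h1, h2⟩ := hα
    apply smono (fun β => Pf_db x y α β)
    intro β h3 h4
    have e1 : 0 < sin α := sin_pos_of_pos_of_lt_pi (by linarith) (by linarith)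
    have e2 : 0 < cos β := cos_pos_of_mem_Ioo ⟨by linarith, by linarith⟩
    have e3 : 0 ≤ sin (2*x-2*α) := sin_nonneg_of_nonneg_of_le_pi (by linarith) (by linarith)
    have e4 : 0 ≤ cos (2*y-2*β) := cos_nonneg_of_mem_Icc ⟨by linarith, by linarith⟩
    positivity
  · intro β hβ
    obtain ⟨h1, h2⟩ := hβ
    apply smono (fun α => (E1f_da x y α β).sub (E2f_da x y α β))
    intro α h3 h4
    have := Ga_pos α (2*x-2*α) β (2*y-2*β) (by linarith) (by linarith) (by linarith) (by linarith) (by linarith)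
      (by linarith) (by linarith)
    rw [cos_sub (2*x-2*α) (2*y-2*β)] at this
    linarith
  · intro α hα
    obtain ⟨h1, h2⟩ := hα
    apply anti (fun β => (E1f_db x y α β).sub (E2f_db x y α β))
    intro β h3 h4
    have : 0 ≤ -cos (2*β) - cos α*cos (2*x-2*α-β) + sin β*sin (2*y-2*β-α) + 2*cos β*cos (2*y-2*β-α)
        + 2*cos (2*x-2*α-(2*y-2*β)) := by
      rcases le_total (2*y-2*β) α with h | h
      · exact Gb_I _ _ _ _ (by linarith) (by linarith) (by linarith) (by linarith) (by linarith) h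
      · exact Gb_II _ _ _ _ (by linarith) (by linarith) (by linarith) (by linarith) h (by linarith)
          (hΦ _ _ _ (by linarith) (by linarith) (by linarith) h (by linarith))
    rw [cos_sub (2*x-2*α) (2*y-2*β)] at this
    linarith


noncomputable def C00 (x α β : ℝ) : ℝ :=
  1 - cos α ^ 2 - cos (2*x - 2 * α) ^ 2 - cos β ^ 2 - 2 * cos α * cos (2*x - 2 * α) * cos β
noncomputable def C11 (y α β : ℝ) : ℝ :=
  1 - cos α ^ 2 - cos β ^ 2 - cos (2*y - 2 * β) ^ 2 - 2 * cos α * cos β * cos (2*y - 2 * β)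
noncomputable def F1 (x y α β : ℝ) : ℝ :=
  C00 x α β * sin β ^ 2 - C11 y α β * sin (2*x - 2 * α) ^ 2
noncomputable def F2 (x y α β : ℝ) : ℝ :=
  C11 y α β * sin α ^ 2 - C00 x α β * sin (2*y - 2 * β) ^ 2
noncomputable def X1 (x α β : ℝ) : ℝ := cos β + cos α * cos (2*x-2*α)
noncomputable def Y1 (y α β : ℝ) : ℝ := cos (2*y-2*β) + cos α * cos β
noncomputable def X2 (y α β : ℝ) : ℝ := cos α + cos β * cos (2*y-2*β)
noncomputable def Y2 (x α β : ℝ) : ℝ := cos (2*x-2*α) + cos α * cos β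

lemma C00_eq (x α β : ℝ) : C00 x α β = (sin α * sin (2*x-2*α))^2 - X1 x α β^2 := by
  unfold C00 X1
  rw [mul_pow, sin_sq, sin_sq]; ring
lemma F1_eq (x y α β : ℝ) : F1 x y α β =
    -(E1f x y α β * (X1 x α β * sin β + Y1 y α β * sin (2*x-2*α))) := by
  have h1 := sin_sq α
  have h2 := sin_sq β
  have h3 := sin_sq (2*x-2*α)
  have e1 : C11 y α β = (sin α * sin β)^2 - Y1 y α β^2 := by
    unfold C11 Y1
    rw [mul_pow, sin_sq, sin_sq]; ring
  rw [F1, C00_eq, e1, E1f]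
  unfold X1 Y1
  ring
lemma F2_eq (x y α β : ℝ) : F2 x y α β =
    -(E2f x y α β * (X2 y α β * sin α + Y2 x α β * sin (2*y-2*β))) := by
  have e1 : C11 y α β = (sin β * sin (2*y-2*β))^2 - X2 y α β^2 := by
    unfold C11 X2
    rw [mul_pow, sin_sq, sin_sq]; ring
  have e2 : C00 x α β = (sin α * sin β)^2 - Y2 x α β^2 := by
    unfold C00 Y2
    rw [mul_pow, sin_sq, sin_sq]; ring
  rw [F2, e2, e1, E2f]
  unfold X2 Y2
  ring
lemma F_comb (x y α β : ℝ) : sin α^2 * F1 x y α β + sin (2*x-2*α)^2 * F2 x y α β =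
    C00 x α β * (Pf x y α β * (sin α * sin β + sin (2*x-2*α) * sin (2*y-2*β))) := by
  unfold F1 F2 Pf; ring

lemma P_of_F (x y α β : ℝ) (hC : C00 x α β < 0) (h1 : F1 x y α β = 0) (h2 : F2 x y α β = 0)
    (s1 : 0 ≤ sin α) (s2 : 0 ≤ sin β) (s3 : 0 ≤ sin (2*x-2*α)) (s4 : 0 ≤ sin (2*y-2*β)) :
    Pf x y α β = 0 := by
  have h := F_comb x y α β
  rw [h1, h2] at h
  have h3 : Pf x y α β * (sin α * sin β + sin (2*x-2*α) * sin (2*y-2*β)) = 0 := by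
    have := hC.ne
    have h' : C00 x α β * (Pf x y α β * (sin α * sin β + sin (2*x-2*α) * sin (2*y-2*β))) = 0 := by
      rw [← h]; ring
    exact (mul_eq_zero.mp h').resolve_left this
  rcases mul_eq_zero.mp h3 with h | h
  · exact h
  · have a1 := mul_nonneg s1 s2
    have a2 := mul_nonneg s3 s4
    unfold Pf; linarith

lemma C00_neg (x α β : ℝ) (s1 : 0 ≤ sin α) (s3 : 0 ≤ sin (2*x-2*α)) (h : 0 < cos β + cos (2*x-α)) :
    C00 x α β < 0 := by
  have e : cos (2*x-α) = cos α * cos (2*x-2*α) - sin α * sin (2*x-2*α) := by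
    rw [← cos_add]; ring_nf
  rw [C00_eq]
  have h1 : sin α * sin (2*x-2*α) < X1 x α β := by unfold X1; linarith
  have := mul_nonneg s1 s3
  nlinarith

lemma E2plus2 (y α β : ℝ) (hy : 0 < y) (hy' : y ≤ π/3) (h1 : π/3 ≤ α) (h2 : α ≤ π/2)
    (h3 : 0 ≤ β) (h4 : β ≤ 2*y/3) : 0 < X2 y α β * sin α + Y2 (π/2) α β * sin (2*y-2*β) := by
  have hpi := pi_pos
  have c1 : 0 ≤ cos α := cos_nonneg_of_mem_Icc ⟨by linarith, by linarith⟩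
  have c2 : cos α ≤ 1/2 := by
    rw [← cos_pi_div_three]
    exact cos_le_cos_of_nonneg_of_le_pi (by linarith) (by linarith) (by linarith)
  have s1 : 0 < sin α := sin_pos_of_pos_of_lt_pi (by linarith) (by linarith)
  have c3 : 0 < cos β := cos_pos_of_mem_Ioo ⟨by linarith, by linarith⟩
  have s4 : 0 < sin (2*y-2*β) := sin_pos_of_pos_of_lt_pi (by linarith) (by linarith)
  have e : cos (2*(π/2)-2*α) = 1 - 2*cos α^2 := by
    have : 2*(π/2)-2*α = π - 2*α := by ring
    rw [this, cos_pi_sub, cos_two_mul]; ring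
  unfold X2 Y2
  rw [e]
  have e0 : 1/2 ≤ 1 - 2*cos α^2 := by nlinarith
  rcases le_total (2*y-2*β) (π/2) with h | h
  · have : 0 ≤ cos (2*y-2*β) := cos_nonneg_of_mem_Icc ⟨by linarith, by linarith⟩
    positivity
  · have k2 : -(1/2) ≤ cos (2*y-2*β) := by
      have : cos (π - π/3) = -(1/2) := by rw [cos_pi_sub, cos_pi_div_three]
      rw [← this]
      exact cos_le_cos_of_nonneg_of_le_pi (by linarith) (by linarith) (by linarith)
    have k3 : √3/2 ≤ sin (2*y-2*β) := by
      rw [← sin_pi_div_three, ← sin_pi_sub (2*y-2*β)]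
      exact sin_le_sin_of_le_of_le_pi_div_two (by linarith) (by linarith) (by linarith)
    have q2 : (1.73:ℝ) ≤ √3 := by apply le_sqrt_of_sq_le; norm_num
    have k4 : -(1/2) ≤ cos β * cos (2*y-2*β) := by nlinarith [cos_le_one β]
    have k5 : -(1/2 - cos α) ≤ (cos α + cos β * cos (2*y-2*β)) * sin α := by
      nlinarith [sin_le_one α]
    have k6 : (1 - 2*cos α^2) * 0.865 ≤ (1 - 2*cos α^2 + cos α * cos β) * sin (2*y-2*β) := by
      apply mul_le_mul <;> nlinarith [mul_nonneg c1 c3.le]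
    nlinarith

lemma sol2 (y α β : ℝ) (hy : 0 < y) (hy' : y ≤ π/3) (h1 : π/3 ≤ α) (h2 : α ≤ π/2)
    (h3 : 0 ≤ β) (h4 : β ≤ y) (hF1 : F1 (π/2) y α β = 0) (hF2 : F2 (π/2) y α β = 0) :
    β ≤ 2*y/3 ∧ Pf (π/2) y α β = 0 ∧ -E2f (π/2) y α β = 0 := by
  have hpi := pi_pos
  have s1 : 0 < sin α := sin_pos_of_pos_of_lt_pi (by linarith) (by linarith)
  have s2 : 0 ≤ sin β := sin_nonneg_of_nonneg_of_le_pi (by linarith) (by linarith)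
  have s3 : 0 ≤ sin (2*(π/2)-2*α) := sin_nonneg_of_nonneg_of_le_pi (by linarith) (by linarith)
  have s4 : 0 ≤ sin (2*y-2*β) := sin_nonneg_of_nonneg_of_le_pi (by linarith) (by linarith)
  have c1 : 0 ≤ cos α := cos_nonneg_of_mem_Icc ⟨by linarith, by linarith⟩
  have c2 : cos α ≤ 1/2 := by
    rw [← cos_pi_div_three]
    exact cos_le_cos_of_nonneg_of_le_pi (by linarith) (by linarith) (by linarith)
  have hlt : β < α := by
    by_contra hcon
    have e1 : β = y := by linarith
    have e2 : y = π/3 := by linarith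
    have e3 : α = π/3 := by linarith
    rw [F2, C11, e1, e2, e3] at hF2
    have : 2*(π/3) - 2*(π/3) = 0 := by ring
    rw [this, sin_zero, cos_zero, cos_pi_div_three, sin_pi_div_three] at hF2
    have q : √3^2 = 3 := sq_sqrt (by norm_num)
    nlinarith
  have hC : C00 (π/2) α β < 0 := by
    apply C00_neg _ _ _ s1.le s3
    have : 2*(π/2)-α = π - α := by ring
    rw [this, cos_pi_sub]
    have : cos α < cos β := cos_lt_cos_of_nonneg_of_le_pi (by linarith) (by linarith) hlt
    linarith
  have hP := P_of_F _ _ _ _ hC hF1 hF2 s1.le s2 s3 s4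
  have e : sin (2*(π/2)-2*α) = 2 * sin α * cos α := by
    have : 2*(π/2)-2*α = π - 2*α := by ring
    rw [this, sin_pi_sub, sin_two_mul]
  have hβ : β ≤ 2*y/3 := by
    by_contra hcon
    push Not at hcon
    have : sin (2*y-2*β) < sin β := sin_lt_sin_of_lt_of_le_pi_div_two (by linarith) (by linarith) (by linarith)
    rw [Pf, e] at hP
    have k : sin α * (sin β - 2 * cos α * sin (2*y-2*β)) = 0 := by linarith
    have k2 := (mul_eq_zero.mp k).resolve_left s1.ne'
    nlinarith
  refine ⟨hβ, hP, ?_⟩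
  rw [F2_eq] at hF2
  have := (mul_eq_zero.mp (neg_eq_zero.mp hF2)).resolve_right (E2plus2 y α β hy hy' h1 h2 h3 hβ).ne'
  linarith

lemma conv2 (y α β : ℝ) (h1 : π/3 ≤ α) (h2 : α ≤ π/2)
    (hP : Pf (π/2) y α β = 0) (hE : -E2f (π/2) y α β = 0) : 
    F1 (π/2) y α β = 0 ∧ F2 (π/2) y α β = 0 := by
  have hpi := pi_pos
  have s1 : 0 < sin α := sin_pos_of_pos_of_lt_pi (by linarith) (by linarith)
  have hF2 : F2 (π/2) y α β = 0 := by rw [F2_eq, neg_eq_zero.mp hE]; ring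
  refine ⟨?_, hF2⟩
  have h := F_comb (π/2) y α β
  rw [hF2, hP] at h
  have : sin α^2 * F1 (π/2) y α β = 0 := by linarith
  exact (mul_eq_zero.mp this).resolve_left (by positivity)

set_option maxHeartbeats 1600000 in
lemma sol3 (x y α β : ℝ) (hy : 0 < y) (hxy : y < x) (hx' : x ≤ π/3) (hy' : y ≤ π/4)
    (h1 : 0 ≤ α) (h1' : 2*x-2*α ≤ π/2) (h2 : α ≤ x)
    (h3 : 0 ≤ β) (h4 : β ≤ y) (hF1 : F1 x y α β = 0) (hF2 : F2 x y α β = 0) :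
    2*x/3 ≤ α ∧ β ≤ 2*y/3 ∧ Pf x y α β = 0 ∧ E1f x y α β - E2f x y α β = 0 := by
  have hpi := pi_pos
  have s1 : 0 ≤ sin α := sin_nonneg_of_nonneg_of_le_pi (by linarith) (by linarith)
  have s2 : 0 ≤ sin β := sin_nonneg_of_nonneg_of_le_pi (by linarith) (by linarith)
  have s3 : 0 ≤ sin (2*x-2*α) := sin_nonneg_of_nonneg_of_le_pi (by linarith) (by linarith)
  have s4 : 0 ≤ sin (2*y-2*β) := sin_nonneg_of_nonneg_of_le_pi (by linarith) (by linarith)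
  have c1 : 0 < cos α := cos_pos_of_mem_Ioo ⟨by linarith, by linarith⟩
  have c2 : 0 < cos β := cos_pos_of_mem_Ioo ⟨by linarith, by linarith⟩
  have c3 : 0 ≤ cos (2*x-2*α) := cos_nonneg_of_mem_Icc ⟨by linarith, by linarith⟩
  have c4 : 0 ≤ cos (2*y-2*β) := cos_nonneg_of_mem_Icc ⟨by linarith, by linarith⟩
  have hX1 : 0 < X1 x α β := by unfold X1; positivity
  have hY1 : 0 < Y1 y α β := by unfold Y1; positivity
  have hX2 : 0 < X2 y α β := by unfold X2; positivity
  have hY2 : 0 < Y2 x α β := by unfold Y2; positivity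
  have hC : C00 x α β < 0 := by
    apply C00_neg _ _ _ s1 s3
    have k : cos (π-β) < cos (2*x-α) :=
      cos_lt_cos_of_nonneg_of_le_pi (by linarith) (by linarith) (by linarith)
    rw [cos_pi_sub] at k
    linarith
  have hP := P_of_F _ _ _ _ hC hF1 hF2 s1 s2 s3 s4
  have hE1 : E1f x y α β = 0 := by
    rw [F1_eq] at hF1
    rcases mul_eq_zero.mp (neg_eq_zero.mp hF1) with h | h
    · exact h
    · have a1 := mul_nonneg hX1.le s2
      have a2 := mul_nonneg hY1.le s3
      have : E1f x y α β = X1 x α β * sin β - Y1 y α β * sin (2*x-2*α) := rfl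
      rw [this]; linarith
  have hE2 : E2f x y α β = 0 := by
    rw [F2_eq] at hF2
    rcases mul_eq_zero.mp (neg_eq_zero.mp hF2) with h | h
    · exact h
    · have a1 := mul_nonneg hX2.le s1
      have a2 := mul_nonneg hY2.le s4
      have : E2f x y α β = X2 y α β * sin α - Y2 x α β * sin (2*y-2*β) := rfl
      rw [this]; linarith
  have hα : 2*x/3 ≤ α := by
    by_contra hcon
    push Not at hcon
    have k1 : sin α < sin (2*x-2*α) := sin_lt_sin_of_lt_of_le_pi_div_two (by linarith) (by linarith) (by linarith)
    have k2 : 2*y-2*β < β := by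
      by_contra hc
      push Not at hc
      have m1 : sin β ≤ sin (2*y-2*β) := sin_le_sin_of_le_of_le_pi_div_two (by linarith) (by linarith) (by linarith)
      have m2 : 0 < sin (2*y-2*β) := sin_pos_of_pos_of_lt_pi (by linarith) (by linarith)
      rw [Pf] at hP
      nlinarith
    have m1 : cos β < cos (2*y-2*β) := cos_lt_cos_of_nonneg_of_le_pi (by linarith) (by linarith) k2
    have m2 : cos (2*x-2*α) < cos α := cos_lt_cos_of_nonneg_of_le_pi (by linarith) (by linarith) (by linarith)
    have k3 : 2*x-2*α < β := by
      by_contra hc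
      push Not at hc
      have n1 : cos (2*x-2*α) ≤ cos β := cos_le_cos_of_nonneg_of_le_pi (by linarith) (by linarith) hc
      have n2 : sin β ≤ sin (2*x-2*α) := sin_le_sin_of_le_of_le_pi_div_two (by linarith) (by linarith) hc
      have n3 : 0 < sin (2*x-2*α) := by linarith
      have n4 : X1 x α β < Y1 y α β := by unfold X1 Y1; nlinarith
      have : E1f x y α β = X1 x α β * sin β - Y1 y α β * sin (2*x-2*α) := rfl
      nlinarith
    have k4 : α ≤ 2*y-2*β := by
      by_contra hc
      push Not at hc
      have n1 : cos α ≤ cos (2*y-2*β) := cos_le_cos_of_nonneg_of_le_pi (by linarith) (by linarith) hc.le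
      have n2 : sin (2*y-2*β) < sin α := sin_lt_sin_of_lt_of_le_pi_div_two (by linarith) (by linarith) hc
      have n4 : Y2 x α β < X2 y α β := by unfold X2 Y2; nlinarith
      have : E2f x y α β = X2 y α β * sin α - Y2 x α β * sin (2*y-2*β) := rfl
      nlinarith
    linarith
  refine ⟨hα, ?_, hP, by rw [hE1, hE2]; ring⟩
  by_contra hcon
  push Not at hcon
  have k1 : sin (2*x-2*α) ≤ sin α := sin_le_sin_of_le_of_le_pi_div_two (by linarith) (by linarith) (by linarith)
  have k2 : sin (2*y-2*β) < sin β := sin_lt_sin_of_lt_of_le_pi_div_two (by linarith) (by linarith) (by linarith)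
  have k3 : 0 < sin α := sin_pos_of_pos_of_lt_pi (by linarith) (by linarith)
  rw [Pf] at hP
  nlinarith

lemma conv3 (x y α β : ℝ) (hy : 0 < y) (hx : 0 < x) (hx' : x ≤ π/3) (hy' : y ≤ π/4)
    (h1 : 2*x/3 ≤ α) (h2 : α < x) (h3 : 0 < β) (h4 : β ≤ 2*y/3)
    (hP : Pf x y α β = 0) (hG : E1f x y α β - E2f x y α β = 0) :
    F1 x y α β = 0 ∧ F2 x y α β = 0 := by
  have hpi := pi_pos
  have s1 : 0 < sin α := sin_pos_of_pos_of_lt_pi (by linarith) (by linarith)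
  have s2 : 0 < sin β := sin_pos_of_pos_of_lt_pi (by linarith) (by linarith)
  have s3 : 0 < sin (2*x-2*α) := sin_pos_of_pos_of_lt_pi (by linarith) (by linarith)
  have s4 : 0 < sin (2*y-2*β) := sin_pos_of_pos_of_lt_pi (by linarith) (by linarith)
  have c1 : 0 < cos α := cos_pos_of_mem_Ioo ⟨by linarith, by linarith⟩
  have c2 : 0 < cos β := cos_pos_of_mem_Ioo ⟨by linarith, by linarith⟩
  have c3 : 0 ≤ cos (2*x-2*α) := cos_nonneg_of_mem_Icc ⟨by linarith, by linarith⟩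
  have c4 : 0 ≤ cos (2*y-2*β) := cos_nonneg_of_mem_Icc ⟨by linarith, by linarith⟩
  have hX1 : 0 < X1 x α β := by unfold X1; positivity
  have hY1 : 0 < Y1 y α β := by unfold Y1; positivity
  have hX2 : 0 < X2 y α β := by unfold X2; positivity
  have hY2 : 0 < Y2 x α β := by unfold Y2; positivity
  have h := F_comb x y α β
  have e : E2f x y α β = E1f x y α β := by linarith
  rw [hP, F1_eq, F2_eq, e] at h
  have k : E1f x y α β * (sin α^2 * (X1 x α β * sin β + Y1 y α β * sin (2*x-2*α)) +
    sin (2*x-2*α)^2 * (X2 y α β * sin α + Y2 x α β * sin (2*y-2*β))) = 0 := by linarith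
  have k2 := (mul_eq_zero.mp k).resolve_right (by positivity)
  rw [F1_eq, F2_eq, e, k2]
  constructor <;> ring

lemma f1_eq (a b : ℤ) (α β : ℝ) : f1 a b α β = F1 (π/(a:ℝ)) (π/(b:ℝ)) α β := by
  unfold f1 F1 B00 B11 C00 C11
  rw [mul_div_assoc, mul_div_assoc]
lemma f2_eq (a b : ℤ) (α β : ℝ) : f2 a b α β = F2 (π/(a:ℝ)) (π/(b:ℝ)) α β := by
  unfold f2 F2 B00 B11 C00 C11
  rw [mul_div_assoc, mul_div_assoc]

/-- Gluing: from the statement on the small rectangle to the statement on `D`. -/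
lemma glue (a b : ℤ) (P G : ℝ → ℝ → ℝ) (hx : 0 < π/(a:ℝ)) (hy : 0 < π/(b:ℝ))
    (hC : Concl (π/(a:ℝ)) (π/(b:ℝ)) P G)
    (hG : G (π/(a:ℝ)) 0 = (1 + cos (π/(a:ℝ))) * sin (2*(π/(b:ℝ))) -
      (cos (π/(a:ℝ)) + cos (2*(π/(b:ℝ)))) * sin (π/(a:ℝ)))
    (hs : ∀ α ∈ alphaI a, ∀ β ∈ Set.Icc 0 (π/(b:ℝ)), F1 (π/(a:ℝ)) (π/(b:ℝ)) α β = 0 →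
      F2 (π/(a:ℝ)) (π/(b:ℝ)) α β = 0 → (α ∈ Set.Icc (2*(π/(a:ℝ))/3) (π/(a:ℝ)) ∧
        β ∈ Set.Icc 0 (2*(π/(b:ℝ))/3)) ∧ P α β = 0 ∧ G α β = 0)
    (hc : ∀ α ∈ Set.Icc (2*(π/(a:ℝ))/3) (π/(a:ℝ)), ∀ β ∈ Set.Icc 0 (2*(π/(b:ℝ))/3),
      α < π/(a:ℝ) → 0 < β → P α β = 0 → G α β = 0 →
      α ∈ alphaI a ∧ F1 (π/(a:ℝ)) (π/(b:ℝ)) α β = 0 ∧ F2 (π/(a:ℝ)) (π/(b:ℝ)) α β = 0) :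
    ((∃ p : ℝ × ℝ, p ∈ Dom a b ∧ f1 a b p.1 p.2 = 0 ∧ f2 a b p.1 p.2 = 0 ∧
        0 < p.1 ∧ p.1 < π / (a : ℝ) ∧ 0 < p.2 ∧ p.2 < π / (b : ℝ)) ↔
      (1 + cos (π / (a : ℝ))) * sin (2 * π / (b : ℝ)) >
        (cos (π / (a : ℝ)) + cos (2 * π / (b : ℝ))) * sin (π / (a : ℝ))) ∧
    ((1 + cos (π / (a : ℝ))) * sin (2 * π / (b : ℝ)) >
        (cos (π / (a : ℝ)) + cos (2 * π / (b : ℝ))) * sin (π / (a : ℝ)) →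
      ∃! p : ℝ × ℝ, p ∈ Dom a b ∧ f1 a b p.1 p.2 = 0 ∧ f2 a b p.1 p.2 = 0) := by
  obtain ⟨h1, h2, h3⟩ := hC
  have hiff : (1 + cos (π / (a : ℝ))) * sin (2 * π / (b : ℝ)) >
        (cos (π / (a : ℝ)) + cos (2 * π / (b : ℝ))) * sin (π / (a : ℝ)) ↔ 0 < G (π/(a:ℝ)) 0 := by
    rw [hG, mul_div_assoc, gt_iff_lt, sub_pos]
  rw [hiff]
  have hs' : ∀ p : ℝ × ℝ, p ∈ Dom a b → f1 a b p.1 p.2 = 0 → f2 a b p.1 p.2 = 0 →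
      (p.1 ∈ Set.Icc (2*(π/(a:ℝ))/3) (π/(a:ℝ)) ∧
        p.2 ∈ Set.Icc 0 (2*(π/(b:ℝ))/3)) ∧ P p.1 p.2 = 0 ∧ G p.1 p.2 = 0 := by
    intro p hp e1 e2
    rw [f1_eq] at e1
    rw [f2_eq] at e2
    exact hs _ hp.1 _ hp.2 e1 e2
  have hex : 0 < G (π/(a:ℝ)) 0 → ∃ p : ℝ × ℝ, p ∈ Dom a b ∧ f1 a b p.1 p.2 = 0 ∧ f2 a b p.1 p.2 = 0 ∧
        0 < p.1 ∧ p.1 < π / (a : ℝ) ∧ 0 < p.2 ∧ p.2 < π / (b : ℝ) := by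
    intro h
    obtain ⟨α, hα, β, hβ, hP, hGG, hlt, hpos⟩ := h3 h
    obtain ⟨hD, e1, e2⟩ := hc α hα β hβ hlt hpos hP hGG
    have hb2 := hβ.2
    have ha1 := hα.1
    refine ⟨(α, β), ⟨hD, hβ.1, ?_⟩, ?_, ?_, ?_, hlt, hpos, ?_⟩
    · show β ≤ _
      linarith
    · rw [f1_eq]; exact e1
    · rw [f2_eq]; exact e2
    · show 0 < α
      linarith
    · show β < _
      linarith
  refine ⟨⟨?_, hex⟩, ?_⟩
  · rintro ⟨p, hp, e1, e2, -, hlt, -⟩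
    obtain ⟨⟨m1, m2⟩, hP, hGG⟩ := hs' p hp e1 e2
    exact h2 _ m1 _ m2 hP hGG hlt
  · intro h
    obtain ⟨p, hp, e1, e2, -⟩ := hex h
    refine ⟨p, ⟨hp, e1, e2⟩, ?_⟩
    rintro q ⟨hq, d1, d2⟩
    obtain ⟨⟨m1, m2⟩, hP, hGG⟩ := hs' p hp e1 e2
    obtain ⟨⟨n1, n2⟩, hP', hGG'⟩ := hs' q hq d1 d2
    obtain ⟨r1, r2⟩ := h1 _ n1 _ n2 _ m1 _ m2 hP' hGG' hP hGG
    exact Prod.ext r1 r2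

theorem stmt0 (a b : ℤ) (ha : 2 ≤ a) (hab : a < b) :
    ((∃ p : ℝ × ℝ, p ∈ Dom a b ∧ f1 a b p.1 p.2 = 0 ∧ f2 a b p.1 p.2 = 0 ∧
        0 < p.1 ∧ p.1 < π / (a : ℝ) ∧ 0 < p.2 ∧ p.2 < π / (b : ℝ)) ↔
      (1 + cos (π / (a : ℝ))) * sin (2 * π / (b : ℝ)) >
        (cos (π / (a : ℝ)) + cos (2 * π / (b : ℝ))) * sin (π / (a : ℝ))) ∧
    ((1 + cos (π / (a : ℝ))) * sin (2 * π / (b : ℝ)) >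
        (cos (π / (a : ℝ)) + cos (2 * π / (b : ℝ))) * sin (π / (a : ℝ)) →
      ∃! p : ℝ × ℝ, p ∈ Dom a b ∧ f1 a b p.1 p.2 = 0 ∧ f2 a b p.1 p.2 = 0) := by
  have hpi := pi_pos
  have hdiv : ∀ (n : ℤ) (m : ℝ), 0 < m → m ≤ (n:ℝ) → π/(n:ℝ) ≤ π/m := by
    intro n m hm hmn
    exact div_le_div_of_nonneg_left hpi.le hm hmn
  have haR : (2:ℝ) ≤ (a:ℝ) := by exact_mod_cast ha
  have habR : (a:ℝ) < (b:ℝ) := by exact_mod_cast hab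
  have hx : 0 < π/(a:ℝ) := by apply div_pos hpi; linarith
  have hy : 0 < π/(b:ℝ) := by apply div_pos hpi; linarith
  have hyx : π/(b:ℝ) < π/(a:ℝ) := div_lt_div_of_pos_left hpi (by linarith) habR
  rcases eq_or_lt_of_le ha with h2 | h2
  · subst h2
    have hb3 : (3:ℝ) ≤ (b:ℝ) := by exact_mod_cast (by omega : (3:ℤ) ≤ b)
    have hyb := hdiv b 3 (by norm_num) hb3
    have hA : alphaI 2 = Set.Icc (π/3) (π/2) := by simp [alphaI]
    have hcast : ((2:ℤ):ℝ) = 2 := by norm_num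
    refine glue 2 b (Pf (π/2) (π/(b:ℝ))) (fun α β => -E2f (π/2) (π/(b:ℝ)) α β) hx hy ?_ ?_ ?_ ?_
    · rw [hcast]
      exact core2 _ hy hyb
    · rw [hcast]
      show -E2f _ _ _ _ = _
      rw [E2_corner]; ring
    · rw [hA, hcast]
      intro α hα β hβ e1 e2
      obtain ⟨q1, q2, q3⟩ := sol2 _ _ _ hy hyb hα.1 hα.2 hβ.1 hβ.2 e1 e2
      have := hα.1
      exact ⟨⟨⟨by linarith, hα.2⟩, hβ.1, q1⟩, q2, q3⟩
    · rw [hA, hcast]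
      intro α hα β hβ hlt hpos hP hG
      have h1 : π/3 ≤ α := by have := hα.1; linarith
      exact ⟨⟨h1, hα.2⟩, conv2 _ _ _ h1 hα.2 hP hG⟩
  · have ha3R : (3:ℝ) ≤ (a:ℝ) := by exact_mod_cast (by omega : (3:ℤ) ≤ a)
    have hb4 : (4:ℝ) ≤ (b:ℝ) := by exact_mod_cast (by omega : (4:ℤ) ≤ b)
    have hxa := hdiv a 3 (by norm_num) ha3R
    have hyb := hdiv b 4 (by norm_num) hb4
    have hΦ : ∀ α p q, 0 ≤ p → p ≤ α → 2*α+p = 2*(π/(a:ℝ)) → α ≤ q → q ≤ 2*(π/(b:ℝ)) →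
        0 ≤ 2*cos (q-α)+2*cos (q-p)-1-cos α := by
      intro α p q hp hpα hs hαq hq
      rcases (by omega : a = 3 ∨ a = 4 ∨ 5 ≤ a) with h | h | h
      · subst h
        exact Phi3 α p q hp hpα (by rw [hs]; norm_num) hαq (by linarith)
      · subst h
        have hb5 : (5:ℝ) ≤ (b:ℝ) := by exact_mod_cast (by omega : (5:ℤ) ≤ b)
        have := hdiv b 5 (by norm_num) hb5
        exact Phi4 α p q hp hpα (by rw [hs]; norm_num) hαq (by linarith)
      · have ha5 : (5:ℝ) ≤ (a:ℝ) := by exact_mod_cast h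
        have hb6 : (6:ℝ) ≤ (b:ℝ) := by exact_mod_cast (by omega : (6:ℤ) ≤ b)
        have i1 := hdiv b 6 (by norm_num) hb6
        have i2 := hdiv a 5 (by norm_num) ha5
        exact Phi5 α p q hp hpα (by linarith) hαq (by linarith)
    have hAs : ∀ α ∈ alphaI a, 0 ≤ α ∧ 2*(π/(a:ℝ))-2*α ≤ π/2 ∧ α ≤ π/(a:ℝ) := by
      intro α hα
      unfold alphaI at hα
      rw [if_neg (by omega)] at hα
      by_cases h : a = 3
      · rw [if_pos h] at hα
        subst h
        have hcast : ((3:ℤ):ℝ) = 3 := by norm_num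
        rw [hcast]
        have j1 := hα.1
        have j2 := hα.2
        exact ⟨by linarith, by linarith, j2⟩
      · rw [if_neg h] at hα
        have ha4 : (4:ℝ) ≤ (a:ℝ) := by exact_mod_cast (by omega : (4:ℤ) ≤ a)
        have i2 := hdiv a 4 (by norm_num) ha4
        have j1 := hα.1
        exact ⟨j1, by linarith, hα.2⟩
    have hAc : ∀ α, 2*(π/(a:ℝ))/3 ≤ α → α ≤ π/(a:ℝ) → α ∈ alphaI a := by
      intro α h1 h2'
      unfold alphaI
      rw [if_neg (by omega)]
      by_cases h : a = 3
      · rw [if_pos h]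
        subst h
        have hcast : ((3:ℤ):ℝ) = 3 := by norm_num
        rw [hcast] at h1 h2'
        exact ⟨by linarith, h2'⟩
      · rw [if_neg h]
        exact ⟨by linarith, h2'⟩
    refine glue a b (Pf (π/(a:ℝ)) (π/(b:ℝ)))
      (fun α β => E1f (π/(a:ℝ)) (π/(b:ℝ)) α β - E2f (π/(a:ℝ)) (π/(b:ℝ)) α β) hx hy ?_ ?_ ?_ ?_
    · exact core3 _ _ hy hyx hxa hyb hΦ
    · show E1f _ _ _ _ - E2f _ _ _ _ = _
      rw [E1_corner, E2_corner]; ring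
    · intro α hα β hβ e1 e2
      obtain ⟨k1, k2, k3⟩ := hAs α hα
      obtain ⟨q0, q1, q2, q3⟩ := sol3 _ _ _ _ hy hyx hxa hyb k1 k2 k3 hβ.1 hβ.2 e1 e2
      exact ⟨⟨⟨q0, k3⟩, hβ.1, q1⟩, q2, q3⟩
    · intro α hα β hβ hlt hpos hP hG
      exact ⟨hAc α hα.1 hα.2, conv3 _ _ _ _ hy hx hxa hyb hα.1 hlt hpos hβ.2 hP hG⟩
end

section
/- Let a = 2 and let b > 2 be an integer. Suppose α₁ ∈ (0, π/2) and β₁ ∈ (0, π/b) with β₂ := 2π/b − 2β₁ > 0 satisfy the edge-condition system f₁(α₁,β₁) = 0 and f₂(α₁,β₁) = 0, and suppose that both B₀₀ := 1 − cos²α₁ − cos²α₂ − cos²β₁ − 2·cos α₁·cos α₂·cos β₁ and B₁₁ := 1 − cos²α₁ − cos²β₁ − cos²β₂ − 2·cos α₁·cos β₁·cos β₂ are nonzero (where α₂ := π − 2α₁). Then cos α₁ = sin β₁ / (2·sin β₂); in particular, if α₁ < π/3 then sin β₁ > sin β₂. -/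
open Real

theorem stmt2 (b : ℤ) (hb : 2 < b) (α₁ β₁ : ℝ)
    (hα : α₁ ∈ Set.Ioo 0 (π / 2)) (hβ : β₁ ∈ Set.Ioo 0 (π / (b : ℝ)))
    (hβ₂ : 0 < 2 * π / (b : ℝ) - 2 * β₁)
    (hf1 : f1 2 b α₁ β₁ = 0) (hf2 : f2 2 b α₁ β₁ = 0)
    (hB00 : B00 2 α₁ β₁ ≠ 0) (hB11 : B11 b α₁ β₁ ≠ 0) :
    cos α₁ = sin β₁ / (2 * sin (2 * π / (b : ℝ) - 2 * β₁)) ∧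
    (α₁ < π / 3 → sin β₁ > sin (2 * π / (b : ℝ) - 2 * β₁)) := by
  have hb' : (2 : ℝ) < (b : ℝ) := by exact_mod_cast hb
  have hπ := Real.pi_pos
  have hpb : π / (b : ℝ) < π / 2 := div_lt_div_of_pos_left hπ (by norm_num) hb'
  obtain ⟨hα0, hα1⟩ := hα
  obtain ⟨hβ0, hβ1⟩ := hβ
  have e2 : 2 * π / (b : ℝ) = 2 * (π / (b : ℝ)) := by ring
  have hs1 : 0 < sin β₁ := sin_pos_of_pos_of_lt_pi hβ0 (by linarith)
  have hs2 : 0 < sin (2 * π / (b : ℝ) - 2 * β₁) :=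
    sin_pos_of_pos_of_lt_pi hβ₂ (by linarith)
  have hc : 0 < cos α₁ := cos_pos_of_mem_Ioo ⟨by linarith, hα1⟩
  have hsin : sin (2 * π / ((2 : ℤ) : ℝ) - 2 * α₁) = 2 * sin α₁ * cos α₁ := by
    have : 2 * π / ((2 : ℤ) : ℝ) - 2 * α₁ = π - 2 * α₁ := by push_cast; ring
    rw [this, sin_pi_sub, sin_two_mul]
  unfold f1 at hf1
  unfold f2 at hf2
  rw [hsin] at hf1
  generalize sin (2 * π / (b : ℝ) - 2 * β₁) = t at *
  have hsq : sin β₁ ^ 2 = (2 * cos α₁ * t) ^ 2 := by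
    apply mul_left_cancel₀ hB00
    linear_combination hf1 + 4 * cos α₁ ^ 2 * hf2
  have key : sin β₁ = 2 * cos α₁ * t :=
    (pow_left_inj₀ hs1.le (by positivity) two_ne_zero).1 hsq
  refine ⟨?_, fun h => ?_⟩
  · rw [key]; field_simp
  · have h2 : 1 / 2 < cos α₁ := by
      rw [← cos_pi_div_three]
      exact cos_lt_cos_of_nonneg_of_le_pi hα0.le (by linarith) h
    rw [key]
    nlinarith
end

section
/- Let a = 3 and let b ≥ 4 be an integer. Then for every α₁ ∈ [0, π/12) and every β₁ ∈ [0, π/b], one has f₁(α₁, β₁) > 0. In particular, the edge-condition system f₁ = 0, f₂ = 0 has no solution with α₁ ∈ [0, π/12) and β₁ ∈ [0, π/b]. -/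
open Real

theorem key_ineq (x y z d : ℝ) (hx : 93 / 100 ≤ x ^ 2) (hx0 : 0 ≤ x) (hx1 : x ≤ 1)
    (hy : 1 / 2 ≤ y ^ 2) (hy0 : 0 ≤ y) (hy1 : y ≤ 1) (hz : 0 ≤ z)
    (hd : d ≤ 0) (hd1 : -(1 / 2) ≤ d) :
    0 < (1 - x ^ 2 - d ^ 2 - y ^ 2 - 2 * x * d * y) * (1 - y ^ 2)
      - (1 - x ^ 2 - y ^ 2 - z ^ 2 - 2 * x * y * z) * (1 - d ^ 2) := by
  have hd2 : d ^ 2 ≤ 1 / 4 := by nlinarith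
  have hxyz : 0 ≤ x * y * z := by positivity
  have hy2 : y ^ 2 ≤ 1 := by nlinarith
  have hdy : -(1 / 2) ≤ d * y := by nlinarith
  have hdy0 : d * y ≤ 0 := by nlinarith
  have hx2 : 1 / 2 ≤ x := by nlinarith
  have h1 : (x + d * y) ^ 2 ≤ 1 := by nlinarith
  have h2 : (1 - y ^ 2) * (x + d * y) ^ 2 ≤ 1 / 2 := by nlinarith [sq_nonneg (x + d * y)]
  have h3 : 68 / 100 ≤ x ^ 2 - y ^ 2 * (1 - y ^ 2) := by nlinarith [sq_nonneg (y ^ 2 - 1 / 2)]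
  have h4 : 51 / 100 ≤ (1 - d ^ 2) * (x ^ 2 - y ^ 2 * (1 - y ^ 2)) := by nlinarith
  have h5 : 0 ≤ (z ^ 2 + 2 * (x * y * z)) * (1 - d ^ 2) :=
    mul_nonneg (by positivity) (by linarith)
  nlinarith

theorem f1_pos (b : ℤ) (hb : 4 ≤ b) (α β : ℝ) (hα : α ∈ Set.Ico 0 (π / 12))
    (hβ : β ∈ Set.Icc 0 (π / (b : ℝ))) : f1 3 b α β > 0 := by
  obtain ⟨ha0, ha1⟩ := hα
  obtain ⟨hb0, hb1⟩ := hβ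
  have hpi := Real.pi_pos
  have hb4 : (4 : ℝ) ≤ (b : ℝ) := by exact_mod_cast hb
  have hpb : π / (b : ℝ) ≤ π / 4 := by gcongr
  have e : 2 * π / (b : ℝ) = 2 * (π / b) := by ring
  unfold f1 B00 B11
  rw [Real.sin_sq, Real.sin_sq]
  apply key_ineq
  · have h : cos (π / 6) ≤ cos (2 * α) :=
      Real.cos_le_cos_of_nonneg_of_le_pi (by linarith) (by linarith) (by linarith)
    rw [Real.cos_pi_div_six] at h
    have h3 : (1.72 : ℝ) ≤ √3 := Real.le_sqrt_of_sq_le (by norm_num)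
    rw [Real.cos_sq]
    linarith
  · exact Real.cos_nonneg_of_mem_Icc ⟨by linarith, by linarith⟩
  · exact Real.cos_le_one _
  · have h : 0 ≤ cos (2 * β) := Real.cos_nonneg_of_mem_Icc ⟨by linarith, by linarith⟩
    rw [Real.cos_sq]
    linarith
  · exact Real.cos_nonneg_of_mem_Icc ⟨by linarith, by linarith⟩
  · exact Real.cos_le_one _
  · rw [e]
    exact Real.cos_nonneg_of_mem_Icc ⟨by linarith, by linarith⟩
  · push_cast
    exact Real.cos_nonpos_of_pi_div_two_le_of_le (by linarith) (by linarith)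
  · push_cast
    have h : cos (π - π / 3) ≤ cos (2 * π / 3 - 2 * α) :=
      Real.cos_le_cos_of_nonneg_of_le_pi (by linarith) (by linarith) (by linarith)
    rw [Real.cos_pi_sub, Real.cos_pi_div_three] at h
    exact h

theorem stmt4 (b : ℤ) (hb : 4 ≤ b) :
    (∀ α₁ ∈ Set.Ico 0 (π / 12), ∀ β₁ ∈ Set.Icc 0 (π / (b : ℝ)),
      f1 3 b α₁ β₁ > 0) ∧
    ¬ ∃ α₁ ∈ Set.Ico 0 (π / 12), ∃ β₁ ∈ Set.Icc 0 (π / (b : ℝ)),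
      f1 3 b α₁ β₁ = 0 ∧ f2 3 b α₁ β₁ = 0 := by
  refine ⟨fun α hα β hβ => f1_pos b hb α β hα hβ, ?_⟩
  rintro ⟨α, hα, β, hβ, h, -⟩
  exact (f1_pos b hb α β hα hβ).ne' h
end

section
/- Let a, b be integers with b > a ≥ 2. If f₂(π/a, 0) < 0, then there is no pair (α₁, β₁) ∈ D satisfying the edge-condition system f₁(α₁,β₁) = 0 and f₂(α₁,β₁) = 0. -/
open Real

/-- Final trigonometric step: the hypothesis `(c+C) sin u > (1+c) sin 2v` is incompatible with
the two lower bounds for `sin β₂` and `sin β₁`. -/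
lemma final_step (x y β₁ β₂ K L : ℝ) (hx0 : 0 ≤ x) (hx : x ≤ π / 2) (hy0 : 0 ≤ y)
    (hy : y ≤ π / 4) (hb1 : 0 ≤ β₁) (hb2 : 0 ≤ β₂) (hv : 2 * β₁ + β₂ ≤ π / 2)
    (hK : 0 ≤ K) (hKL : K ≤ L)
    (h2 : K * sin x ≤ L * sin β₂) (h1 : K * sin (2 * y) ≤ L * sin β₁) :
    K * sin (x + y) ≤ L * sin (2 * β₁ + β₂) := by
  have hpi := pi_pos
  have hL : 0 ≤ L := hK.trans hKL
  have sx : 0 ≤ sin x := sin_nonneg_of_nonneg_of_le_pi hx0 (by linarith)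
  have sy : 0 ≤ sin y := sin_nonneg_of_nonneg_of_le_pi hy0 (by linarith)
  have cx : 0 ≤ cos x := cos_nonneg_of_mem_Icc ⟨by linarith, by linarith⟩
  have cy : 0 ≤ cos y := cos_nonneg_of_mem_Icc ⟨by linarith, by linarith⟩
  have h1y : K * sin y ≤ L * sin β₁ := by
    refine le_trans (mul_le_mul_of_nonneg_left ?_ hK) h1
    exact sin_le_sin_of_le_of_le_pi_div_two (by linarith) (by linarith) (by linarith)
  obtain ⟨p, hp0, hpx, hpb, hps⟩ : ∃ p, 0 ≤ p ∧ p ≤ x ∧ p ≤ β₂ ∧ K * sin x ≤ L * sin p := by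
    rcases le_total β₂ x with h | h
    · exact ⟨β₂, hb2, h, le_rfl, h2⟩
    · exact ⟨x, hx0, le_rfl, h, mul_le_mul_of_nonneg_right hKL sx⟩
  obtain ⟨q, hq0, hqy, hqb, hqs⟩ : ∃ q, 0 ≤ q ∧ q ≤ y ∧ q ≤ β₁ ∧ K * sin y ≤ L * sin q := by
    rcases le_total β₁ y with h | h
    · exact ⟨β₁, hb1, h, le_rfl, h1y⟩
    · exact ⟨y, hy0, le_rfl, h, mul_le_mul_of_nonneg_right hKL sy⟩
  have cp : cos x ≤ cos p := cos_le_cos_of_nonneg_of_le_pi hp0 (by linarith) hpx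
  have cq : cos y ≤ cos q := cos_le_cos_of_nonneg_of_le_pi hq0 (by linarith) hqy
  have sp : 0 ≤ sin p := sin_nonneg_of_nonneg_of_le_pi hp0 (by linarith)
  have sq : 0 ≤ sin q := sin_nonneg_of_nonneg_of_le_pi hq0 (by linarith)
  have e1 : K * sin x * cos y ≤ L * sin p * cos q :=
    mul_le_mul hps cq cy (mul_nonneg hL sp)
  have e2 : K * sin y * cos x ≤ L * sin q * cos p :=
    mul_le_mul hqs cp cx (mul_nonneg hL sq)
  have e3 : sin (p + q) ≤ sin (2 * β₁ + β₂) :=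
    sin_le_sin_of_le_of_le_pi_div_two (by linarith) (by linarith) (by linarith)
  have e4 := mul_le_mul_of_nonneg_left e3 hL
  rw [sin_add] at e4
  rw [sin_add]
  linarith

set_option maxHeartbeats 1000000 in
/-- The statement with free real parameters. -/
lemma core_s8 (u v x β₁ : ℝ) (hv : v ≤ π / 4) (hx0 : 0 ≤ x) (hx : x ≤ π / 2) (hxu : x ≤ u)
    (hu : u ≤ π / 2)
    (hb0 : 0 ≤ β₁) (hb : β₁ ≤ v) (ha2 : 2 * u - 2 * x ≤ π / 2) (hs : 2 * u - x + β₁ < π)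
    (h : (1 + cos u) * sin (2 * v) < (cos u + cos (2 * v)) * sin u)
    (h1 : (1 - cos x ^ 2 - cos (2 * u - 2 * x) ^ 2 - cos β₁ ^ 2
        - 2 * cos x * cos (2 * u - 2 * x) * cos β₁) * sin β₁ ^ 2
      - (1 - cos x ^ 2 - cos β₁ ^ 2 - cos (2 * v - 2 * β₁) ^ 2
        - 2 * cos x * cos β₁ * cos (2 * v - 2 * β₁)) * sin (2 * u - 2 * x) ^ 2 = 0)
    (h2 : (1 - cos x ^ 2 - cos β₁ ^ 2 - cos (2 * v - 2 * β₁) ^ 2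
        - 2 * cos x * cos β₁ * cos (2 * v - 2 * β₁)) * sin x ^ 2
      - (1 - cos x ^ 2 - cos (2 * u - 2 * x) ^ 2 - cos β₁ ^ 2
        - 2 * cos x * cos (2 * u - 2 * x) * cos β₁) * sin (2 * v - 2 * β₁) ^ 2 = 0) :
    False := by
  have hpi := pi_pos
  obtain ⟨α₂, hα⟩ : ∃ z, z = 2 * u - 2 * x := ⟨_, rfl⟩
  obtain ⟨β₂, hβ⟩ : ∃ z, z = 2 * v - 2 * β₁ := ⟨_, rfl⟩
  rw [← hα, ← hβ] at h1 h2
  have cu : 0 ≤ cos u := cos_nonneg_of_mem_Icc ⟨by linarith, by linarith⟩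
  have cv : 0 ≤ cos (2 * v) := cos_nonneg_of_mem_Icc ⟨by linarith, by linarith⟩
  have cv1 := cos_le_one (2 * v)
  have cx : 0 ≤ cos x := cos_nonneg_of_mem_Icc ⟨by linarith, by linarith⟩
  have ca : 0 ≤ cos α₂ := cos_nonneg_of_mem_Icc ⟨by linarith, by linarith⟩
  have cb1 : 0 ≤ cos β₁ := cos_nonneg_of_mem_Icc ⟨by linarith, by linarith⟩
  have cb2 : 0 ≤ cos β₂ := cos_nonneg_of_mem_Icc ⟨by linarith, by linarith⟩
  have sx : 0 ≤ sin x := sin_nonneg_of_nonneg_of_le_pi hx0 (by linarith)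
  have sa : 0 ≤ sin α₂ := sin_nonneg_of_nonneg_of_le_pi (by linarith) (by linarith)
  have sb1 : 0 ≤ sin β₁ := sin_nonneg_of_nonneg_of_le_pi hb0 (by linarith)
  have sb2 : 0 ≤ sin β₂ := sin_nonneg_of_nonneg_of_le_pi (by linarith) (by linarith)
  have hcux : cos u ≤ cos x := cos_le_cos_of_nonneg_of_le_pi hx0 (by linarith) hxu
  have hp : cos (2 * v) ≤ cos β₁ * cos β₂ := by
    have e : cos (2 * v) ≤ cos (β₁ + β₂) :=
      cos_le_cos_of_nonneg_of_le_pi (by linarith) (by linarith) (by linarith)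
    rw [cos_add] at e
    linarith [mul_nonneg sb1 sb2]
  have px := sin_sq_add_cos_sq x
  have pa := sin_sq_add_cos_sq α₂
  have pb1 := sin_sq_add_cos_sq β₁
  have pb2 := sin_sq_add_cos_sq β₂
  -- positivity of `-B00`
  have hP : 0 < (cos α₂ + cos x * cos β₁) ^ 2 - sin x ^ 2 * sin β₁ ^ 2 := by
    have e1 : cos (π - α₂) < cos (x + β₁) :=
      cos_lt_cos_of_nonneg_of_le_pi (by linarith) (by linarith) (by linarith)
    rw [cos_pi_sub, cos_add] at e1
    have e2 : 0 < cos α₂ + cos x * cos β₁ - sin x * sin β₁ := by linarith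
    have e3 : 0 < cos α₂ + cos x * cos β₁ + sin x * sin β₁ := by
      linarith [mul_nonneg sx sb1]
    have e4 := mul_pos e2 e3
    linear_combination e4
  have hPe : 1 - cos x ^ 2 - cos α₂ ^ 2 - cos β₁ ^ 2 - 2 * cos x * cos α₂ * cos β₁
      = -((cos α₂ + cos x * cos β₁) ^ 2 - sin x ^ 2 * sin β₁ ^ 2) := by
    rw [sin_sq, sin_sq]; ring
  have hQe : 1 - cos x ^ 2 - cos β₁ ^ 2 - cos β₂ ^ 2 - 2 * cos x * cos β₁ * cos β₂
      = -((cos x + cos β₁ * cos β₂) ^ 2 - sin β₁ ^ 2 * sin β₂ ^ 2) := by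
    rw [sin_sq, sin_sq]; ring
  have hM0 : 0 ≤ cos α₂ + cos x * cos β₁ := by positivity
  have hN0 : 0 ≤ cos x + cos β₁ * cos β₂ := by positivity
  have hM : 0 < cos α₂ + cos x * cos β₁ := by
    rcases hM0.eq_or_lt with e | e
    · rw [← e] at hP
      linarith [mul_nonneg (sq_nonneg (sin x)) (sq_nonneg (sin β₁))]
    · exact e
  -- equality of the first edge
  have E1 : sin β₂ * (cos α₂ + cos x * cos β₁) = sin x * (cos x + cos β₁ * cos β₂) := by
    rw [hPe, hQe] at h2
    refine (sq_eq_sq₀ (mul_nonneg sb2 hM0) (mul_nonneg sx hN0)).1 ?_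
    linear_combination h2
  have hK : 0 ≤ cos u + cos (2 * v) := by positivity
  have hKL : cos u + cos (2 * v) ≤ 1 + cos u := by linarith
  have hMN : (cos u + cos (2 * v)) * (cos α₂ + cos x * cos β₁)
      ≤ (1 + cos u) * (cos x + cos β₁ * cos β₂) := by
    have m1 : cos α₂ + cos x * cos β₁ ≤ 1 + cos x := by
      linarith [cos_le_one α₂, mul_le_mul_of_nonneg_left (cos_le_one β₁) cx]
    have m2 := mul_le_mul_of_nonneg_left m1 hK
    have m3 := mul_le_mul_of_nonneg_left hp (by linarith : (0:ℝ) ≤ 1 + cos u)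
    linarith [mul_nonneg (sub_nonneg.2 hcux) (sub_nonneg.2 cv1)]
  have B2 : (cos u + cos (2 * v)) * sin x ≤ (1 + cos u) * sin β₂ := by
    refine le_of_mul_le_mul_right ?_ hM
    have := mul_le_mul_of_nonneg_left hMN sx
    linear_combination this - (1 + cos u) * E1
  have B1 : (cos u + cos (2 * v)) * sin α₂ ≤ (1 + cos u) * sin β₁ := by
    rcases sx.eq_or_lt with e | e
    · -- degenerate case
      have cx1 : cos x = 1 := by
        rw [← e] at px
        refine (sq_eq_sq₀ cx zero_le_one).1 ?_
        linarith
      have s0 : sin β₂ = 0 := by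
        rw [← e, zero_mul] at E1
        rcases mul_eq_zero.1 E1 with e | e
        · exact e
        · linarith
      have c1 : cos β₂ = 1 := by
        rw [s0] at pb2
        refine (sq_eq_sq₀ cb2 zero_le_one).1 ?_
        linarith
      rw [cx1, c1] at h1
      have cx' : 0 < cos α₂ + cos β₁ := by rw [cx1] at hM; linarith
      have E : sin β₁ * (cos α₂ + cos β₁) = sin α₂ * (1 + cos β₁) := by
        refine (sq_eq_sq₀ (by positivity) (by positivity)).1 ?_
        linear_combination -h1
      have : sin α₂ ≤ sin β₁ := by
        refine le_of_mul_le_mul_right ?_ cx'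
        rw [E]
        exact mul_le_mul_of_nonneg_left (by linarith [cos_le_one α₂]) sa
      exact mul_le_mul hKL this sa (by linarith)
    · have E0 : sin β₁ * sin x = sin α₂ * sin β₂ := by
        refine (sq_eq_sq₀ (by positivity) (by positivity)).1 ?_
        rw [hPe] at h1 h2
        refine mul_left_cancel₀ hP.ne' ?_
        linear_combination (-sin x ^ 2) * h1 - sin α₂ ^ 2 * h2
      refine le_of_mul_le_mul_right ?_ e
      have := mul_le_mul_of_nonneg_left B2 sa
      linear_combination this - (1 + cos u) * E0
  have F := final_step x (α₂ / 2) β₁ β₂ _ _ hx0 hx (by linarith) (by linarith) hb0 (by linarith)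
    (by linarith) hK hKL B2 (by rw [mul_div_cancel₀ _ two_ne_zero]; exact B1)
  rw [show x + α₂ / 2 = u by linarith, show 2 * β₁ + β₂ = 2 * v by linarith] at F
  linarith

theorem stmt8 (a b : ℤ) (ha : 2 ≤ a) (hab : a < b)
    (h : f2 a b (π / (a : ℝ)) 0 < 0) :
    ¬ ∃ p : ℝ × ℝ, p ∈ Dom a b ∧ f1 a b p.1 p.2 = 0 ∧ f2 a b p.1 p.2 = 0 := by
  rintro ⟨⟨x, y⟩, hD, h1, h2⟩
  have hpi := pi_pos
  simp only [Dom, Set.mem_prod, Set.mem_Icc] at hD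
  obtain ⟨hxI, hy0, hy⟩ := hD
  simp only at h1 h2 hxI hy0 hy
  have haR : (2 : ℝ) ≤ a := by exact_mod_cast ha
  have hb3 : (3 : ℝ) ≤ b := by exact_mod_cast (by omega : (3 : ℤ) ≤ b)
  have hc0 : 0 ≤ cos (π / a) := by
    have : π / a ≤ π / 2 := by gcongr
    have : 0 ≤ π / a := by positivity
    exact cos_nonneg_of_mem_Icc ⟨by linarith, by linarith⟩
  have hs0 : 0 ≤ sin (π / a) := by
    have : π / a ≤ π / 2 := by gcongr
    exact sin_nonneg_of_nonneg_of_le_pi (by positivity) (by linarith)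
  have hsq : ((1 + cos (π / a)) * sin (2 * (π / b))) ^ 2
      < ((cos (π / a) + cos (2 * (π / b))) * sin (π / a)) ^ 2 := by
    unfold f2 B00 B11 at h
    rw [show 2 * π / (a : ℝ) - 2 * (π / a) = 0 by ring,
      show 2 * π / (b : ℝ) - 2 * 0 = 2 * (π / b) by ring, cos_zero] at h
    linarith
  have hb4 : (4 : ℤ) ≤ b := by
    by_contra hlt
    have hb : b = 3 := by omega
    have ha' : a = 2 := by omega
    subst hb ha'
    rw [show 2 * (π / ((3 : ℤ) : ℝ)) = π - π / 3 by push_cast; ring, sin_pi_sub, cos_pi_sub] at hsq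
    push_cast at hsq
    rw [cos_pi_div_two, sin_pi_div_two, cos_pi_div_three, sin_pi_div_three] at hsq
    have := Real.sq_sqrt (show (0:ℝ) ≤ 3 by norm_num)
    nlinarith
  have hb4R : (4 : ℝ) ≤ b := by exact_mod_cast hb4
  have hv : π / b ≤ π / 4 := by gcongr
  have hv0 : 0 ≤ π / b := by positivity
  have hcv : 0 ≤ cos (2 * (π / b)) := cos_nonneg_of_mem_Icc ⟨by linarith, by linarith⟩
  have hH := lt_of_pow_lt_pow_left₀ 2 (by positivity) hsq
  have hu2 : π / a ≤ π / 2 := by gcongr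
  have key : 0 ≤ x ∧ x ≤ π / a ∧ 2 * (π / a) - 2 * x ≤ π / 2 ∧ 2 * (π / a) - x + y < π := by
    unfold alphaI at hxI
    split_ifs at hxI with h2a h3a
    · subst h2a
      push_cast
      obtain ⟨l, r⟩ := hxI
      refine ⟨?_, ?_, ?_, ?_⟩ <;> linarith
    · subst h3a
      push_cast
      obtain ⟨l, r⟩ := hxI
      refine ⟨?_, ?_, ?_, ?_⟩ <;> linarith
    · obtain ⟨l, r⟩ := hxI
      have h4 : (4 : ℝ) ≤ a := by exact_mod_cast (by omega : (4 : ℤ) ≤ a)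
      have : π / a ≤ π / 4 := by gcongr
      refine ⟨?_, ?_, ?_, ?_⟩ <;> linarith
  obtain ⟨k1, k2, k3, k4⟩ := key
  unfold f1 B00 B11 at h1
  unfold f2 B00 B11 at h2
  rw [mul_div_assoc, mul_div_assoc] at h1 h2
  exact core_s8 (π / a) (π / b) x y hv k1 (by linarith) k2 hu2 hy0 hy k3 k4 hH h1 h2
end

section
/- Let a, b be integers with b > a ≥ 2. If f₂(π/a, 0) = 0, then (α₁, β₁) = (π/a, 0) is a solution of the edge-condition system f₁ = 0, f₂ = 0, it is the unique solution of this system in D, and it is not proper (since β₁ = 0). -/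
open Real

lemma aux_cos_upper {x : ℝ} (h0 : 0 ≤ x) (h1 : x ≤ 1) :
    cos x ≤ 1 - x ^ 2 / 2 + 5 / 96 * x ^ 4 := by
  have h := Real.cos_bound (x := x) (by rw [abs_of_nonneg h0]; exact h1)
  rw [abs_of_nonneg h0] at h
  have := (abs_le.mp h).2
  linarith

lemma aux_cos_lower {x : ℝ} (h0 : 0 ≤ x) (h1 : x ≤ 2) :
    1 - x ^ 2 / 2 + x ^ 4 / 32 ≤ cos x := by
  have h := Real.one_sub_sq_div_two_le_cos (x := x / 2)
  have e : cos x = 2 * cos (x / 2) ^ 2 - 1 := by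
    rw [← Real.cos_two_mul]; congr 1; ring
  have h2 : 0 ≤ 1 - (x / 2) ^ 2 / 2 := by nlinarith
  have := pow_le_pow_left₀ h2 h 2
  rw [e]; nlinarith

/-- The polynomial controlling `f₂(π/a,0)`. -/
lemma aux_g (a b : ℤ) (ha : 2 ≤ a) (h : f2 a b (π / (a : ℝ)) 0 = 0) :
    (1 - cos (π / a)) * (cos (π / a) + cos (2 * π / b)) ^ 2
      = (1 + cos (π / a)) * (1 - cos (2 * π / b) ^ 2) := by
  have haR : (2 : ℝ) ≤ a := by exact_mod_cast ha
  have hc : 0 ≤ cos (π / a) := by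
    apply cos_nonneg_of_mem_Icc
    constructor
    · have : 0 ≤ π / a := by positivity
      linarith [pi_pos]
    · exact div_le_div_of_nonneg_left pi_pos.le (by norm_num) haR
  have e1 : 2 * π / (a : ℝ) - 2 * (π / a) = 0 := by ring
  have e2 : 2 * π / (b : ℝ) - 2 * 0 = 2 * π / b := by ring
  unfold f2 B11 B00 at h
  rw [e1, e2, cos_zero, sin_sq, sin_sq] at h
  have : (1 + cos (π / a)) * ((1 - cos (π / a)) * (cos (π / a) + cos (2 * π / b)) ^ 2
      - (1 + cos (π / a)) * (1 - cos (2 * π / b) ^ 2)) = 0 := by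
    linear_combination -h
  rcases mul_eq_zero.mp this with h | h
  · linarith
  · linarith

/-- Comparison of `C` with the root of `g`. -/
lemma aux_low {c C C' : ℝ} (hc0 : 0 ≤ c) (hc1 : c ≤ 1) (hC : 0 ≤ C) (hCC : C ≤ C')
    (hg : (1 - c) * (c + C) ^ 2 = (1 + c) * (1 - C ^ 2)) :
    (1 + c) * (1 - C' ^ 2) ≤ (1 - c) * (c + C') ^ 2 := by
  have h1 : (c + C) ^ 2 ≤ (c + C') ^ 2 := pow_le_pow_left₀ (by linarith) (by linarith) 2
  have h2 : C ^ 2 ≤ C' ^ 2 := pow_le_pow_left₀ hC hCC 2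
  have h3 := mul_le_mul_of_nonneg_left h1 (sub_nonneg.mpr hc1)
  have h4 := mul_le_mul_of_nonneg_left h2 (by linarith : 0 ≤ 1 + c)
  linarith

lemma aux_high {c C C' : ℝ} (hc0 : 0 ≤ c) (hc1 : c ≤ 1) (hC : 0 ≤ C') (hCC : C' ≤ C)
    (hg : (1 - c) * (c + C) ^ 2 = (1 + c) * (1 - C ^ 2)) :
    (1 - c) * (c + C') ^ 2 ≤ (1 + c) * (1 - C' ^ 2) := by
  have h1 : (c + C') ^ 2 ≤ (c + C) ^ 2 := pow_le_pow_left₀ (by linarith) (by linarith) 2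
  have h2 : C' ^ 2 ≤ C ^ 2 := pow_le_pow_left₀ hC hCC 2
  have h3 := mul_le_mul_of_nonneg_left h1 (sub_nonneg.mpr hc1)
  have h4 := mul_le_mul_of_nonneg_left h2 (by linarith : 0 ≤ 1 + c)
  linarith

lemma aux_cos_mono {b m : ℝ} (hb : 2 ≤ b) (hbm : b ≤ m) :
    cos (2 * π / b) ≤ cos (2 * π / m) := by
  have hb0 : 0 < b := by linarith
  have hm0 : 0 < m := by linarith
  apply cos_le_cos_of_nonneg_of_le_pi
  · positivity
  · rw [div_le_iff₀ hb0]; nlinarith [pi_pos]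
  · exact div_le_div_of_nonneg_left (by positivity) hb0 hbm

lemma aux_poly {t : ℝ} (h0 : 0 < t) (h1 : t ≤ 0.5236) :
    (t * (1 - 0.1469 * t)) ^ 2 / 2 - (t * (1 - 0.1469 * t)) ^ 4 / 32 ≤
      (t ^ 2 / 2 - 5 / 96 * t ^ 4) - (t ^ 2 / 2 - 5 / 96 * t ^ 4) ^ 2 := by
  have hw : 1 - 4 * (0.1469 * t) ≤ (1 - 0.1469 * t) ^ 4 := by
    have := one_add_mul_le_pow (a := -(0.1469 * t)) (by linarith) 4
    push_cast at this
    have e : 1 + -(0.1469 * t) = 1 - 0.1469 * t := by ring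
    rw [e] at this
    linarith
  have hk : 0 ≤ 0.1469 - 0.1469 ^ 2 * t / 2 - 5 * t / 96 - t / 4 + 5 * t ^ 3 / 96
      - 25 * t ^ 5 / 9216 + t * (1 - 4 * (0.1469 * t)) / 32 := by
    have h2 : t ^ 2 ≤ 1 := by nlinarith
    have h5 : t ^ 5 ≤ t ^ 3 := by
      have : t ^ 5 = t ^ 3 * t ^ 2 := by ring
      rw [this]; nlinarith [pow_pos h0 3]
    have : 0 ≤ 0.1469 - 0.1469 ^ 2 * t / 2 - 5 * t / 96 - t / 4 + 0.049 * t ^ 3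
       + t * (1 - 4 * (0.1469 * t)) / 32 := by
      nlinarith [mul_nonneg h0.le (sq_nonneg (t - 0.5236)), mul_nonneg h0.le (sub_nonneg.mpr h1)]
    nlinarith [pow_pos h0 3]
  have h3 := mul_nonneg (pow_pos h0 3).le hk
  have h4 := mul_le_mul_of_nonneg_left hw (pow_pos h0 4).le
  have e : (t * (1 - 0.1469 * t)) ^ 4 = t ^ 4 * (1 - 0.1469 * t) ^ 4 := by ring
  rw [e]
  nlinarith

lemma aux_big {A : ℝ} (hA : 6 ≤ A) :
    (1 + cos (π / A)) * (1 - cos (2 * π / (2 * A + 1)) ^ 2) <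
      (1 - cos (π / A)) * (cos (π / A) + cos (2 * π / (2 * A + 1))) ^ 2 := by
  have hA0 : 0 < A := by linarith
  have hpi := pi_lt_d4
  have hpi3 := pi_gt_three
  set t := π / A with ht
  have htA : t * A = π := by rw [ht]; field_simp
  have h0 : 0 < t := by positivity
  have h1 : t ≤ 0.5236 := by
    rw [ht, div_le_iff₀ hA0]; nlinarith
  set x := 2 * π / (2 * A + 1) with hx
  have hx0 : 0 < x := by positivity
  have hxw : x ≤ t * (1 - 0.1469 * t) := by
    rw [hx, div_le_iff₀ (by linarith)]
    have : t * (1 - 0.1469 * t) * (2 * A + 1) - 2 * π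
        = t * (1 - 0.1469 * t - 0.2938 * π) := by
      rw [← htA]; ring
    have h5 : 0 ≤ 1 - 0.1469 * t - 0.2938 * π := by linarith
    have := mul_nonneg h0.le h5
    linarith
  have hcu := aux_cos_upper h0.le (by linarith : t ≤ 1)
  have hcl := Real.one_sub_sq_div_two_le_cos (x := t)
  have hxt : t * (1 - 0.1469 * t) ≤ 2 := by nlinarith
  have hy0 : 0 ≤ t * (1 - 0.1469 * t) := by linarith
  have hCl := aux_cos_lower hy0 hxt
  have hCC : cos (t * (1 - 0.1469 * t)) ≤ cos x :=
    cos_le_cos_of_nonneg_of_le_pi hx0.le (by linarith) hxw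
  have hp := aux_poly h0 h1
  have hcu' : cos t ≤ 1 - (t ^ 2 / 2 - 5 / 96 * t ^ 4) := by linarith
  have ht2 : t ^ 2 ≤ 0.28 := by nlinarith
  generalize cos t = c at *
  generalize cos x = C at *
  have he0 : 0 < t ^ 2 / 2 - 5 / 96 * t ^ 4 := by
    have : t ^ 2 / 2 - 5 / 96 * t ^ 4 = t ^ 2 * (1 / 2 - 5 / 96 * t ^ 2) := by ring
    rw [this]
    apply mul_pos (by positivity); nlinarith
  generalize t ^ 2 / 2 - 5 / 96 * t ^ 4 = e0 at *
  obtain ⟨e, rfl⟩ : ∃ e, c = 1 - e := ⟨1 - c, by ring⟩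
  have hee : e0 ≤ e := by
    linarith
  have he2 : e ≤ 0.14 := by linarith
  have hdd : 1 - (e0 - e0 ^ 2) ≤ C := by linarith
  have hd : e ^ 2 ≤ C - (1 - e) := by
    nlinarith only [hdd, mul_nonneg (sub_nonneg.mpr hee) (by linarith : 0 ≤ 1 - e - e0)]
  obtain ⟨d, rfl⟩ : ∃ d, C = (1 - e) + d := ⟨C - (1 - e), by ring⟩
  have hd' : e ^ 2 ≤ d := by linarith
  have hepos : 0 < e := by linarith
  clear hcu hcl hCl hCC hp hcu' hdd hd
  have hdpos : 0 < d := lt_of_lt_of_le (by positivity) hd'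
  have k1 : e ^ 2 * (4 - 2 * e - 2 * e ^ 2) ≤ d * (4 - 2 * e - 2 * e ^ 2) :=
    mul_le_mul_of_nonneg_right hd' (by nlinarith)
  have k2 : 0 < e ^ 2 * (e - 2 * e ^ 2) := by
    apply mul_pos (by positivity); nlinarith
  nlinarith only [sq_nonneg d, k1, k2]

set_option maxHeartbeats 2000000 in
lemma aux_class (a b : ℤ) (ha : 2 ≤ a) (hab : a < b)
    (h : f2 a b (π / (a : ℝ)) 0 = 0) : a = 2 ∧ b = 8 := by
  have hg := aux_g a b ha h
  have haR : (2 : ℝ) ≤ a := by exact_mod_cast ha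
  have hbR : (3 : ℝ) ≤ b := by exact_mod_cast (by omega : 3 ≤ b)
  have hpl := pi_gt_d4
  have hpu := pi_lt_d4
  have s2 : (√2 : ℝ) ^ 2 = 2 := Real.sq_sqrt (by norm_num)
  have s2p : 0 < (√2 : ℝ) := by positivity
  have cos8 : cos (2 * π / (8 : ℝ)) = √2 / 2 := by
    rw [← cos_pi_div_four]; congr 1; ring
  have cos4 : cos (2 * π / (4 : ℝ)) = 0 := by
    rw [← cos_pi_div_two]; congr 1; ring
  have u9 : cos (2 * π / (9 : ℝ)) ≤ 0.77 := by
    have := aux_cos_upper (x := 0.698) (by norm_num) (by norm_num)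
    have h2 : cos (2 * π / (9 : ℝ)) ≤ cos 0.698 :=
      cos_le_cos_of_nonneg_of_le_pi (by norm_num) (by linarith) (by linarith)
    norm_num at this ⊢; linarith
  have l9 : 0.75 ≤ cos (2 * π / (9 : ℝ)) := by
    have := Real.one_sub_sq_div_two_le_cos (x := 0.7)
    have h2 : cos 0.7 ≤ cos (2 * π / (9 : ℝ))  :=
      cos_le_cos_of_nonneg_of_le_pi (by linarith) (by linarith) (by linarith)
    norm_num at this ⊢; linarith
  have l10 : 0.8 ≤ cos (2 * π / (10 : ℝ)) := by
    have := Real.one_sub_sq_div_two_le_cos (x := 0.6284)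
    have h2 : cos 0.6284 ≤ cos (2 * π / (10 : ℝ))  :=
      cos_le_cos_of_nonneg_of_le_pi (by linarith) (by linarith) (by linarith)
    norm_num at this ⊢; linarith
  have u11 : cos (2 * π / (11 : ℝ)) ≤ 0.8427 := by
    have := aux_cos_upper (x := 0.571) (by norm_num) (by norm_num)
    have h2 : cos (2 * π / (11 : ℝ)) ≤ cos 0.571 :=
      cos_le_cos_of_nonneg_of_le_pi (by norm_num) (by linarith) (by linarith)
    norm_num at this ⊢; linarith
  have l12 : 0.86 ≤ cos (2 * π / (12 : ℝ)) := by
    have := Real.one_sub_sq_div_two_le_cos (x := 0.524)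
    have h2 : cos 0.524 ≤ cos (2 * π / (12 : ℝ))  :=
      cos_le_cos_of_nonneg_of_le_pi (by linarith) (by linarith) (by linarith)
    norm_num at this ⊢; linarith
  have up : ∀ m : ℤ, b ≤ m → cos (2 * π / (b : ℝ)) ≤ cos (2 * π / (m : ℝ)) := fun m hm =>
    aux_cos_mono (by linarith) (by exact_mod_cast hm)
  have lo : ∀ m : ℤ, 2 ≤ m → m ≤ b → cos (2 * π / (m : ℝ)) ≤ cos (2 * π / (b : ℝ)) :=
    fun m hm hmb => aux_cos_mono (by exact_mod_cast hm) (by exact_mod_cast hmb)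
  by_cases h2 : a = 2
  · refine ⟨h2, ?_⟩
    subst h2
    have c2 : cos (π / ((2 : ℤ) : ℝ)) = 0 := by push_cast; exact cos_pi_div_two
    rw [c2] at hg
    have hC : cos (2 * π / b) ^ 2 = 1 / 2 := by linarith
    by_cases hb3 : b = 3
    · subst hb3
      have : cos (2 * π / ((3 : ℤ) : ℝ)) = -(1 / 2) := by
        rw [← cos_pi_div_three, ← cos_pi_sub]; congr 1; push_cast; ring
      rw [this] at hC; norm_num at hC
    have hC0 := lo 4 (by norm_num) (by omega)
    push_cast at hC0
    rw [cos4] at hC0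
    have hC1 : cos (2 * π / b) = √2 / 2 := by nlinarith
    rw [← cos8] at hC1
    have hb0 : (0 : ℝ) < b := by linarith
    have := injOn_cos (x₁ := 2 * π / b) (x₂ := 2 * π / 8)
      ⟨by positivity, by rw [div_le_iff₀ hb0]; nlinarith⟩ ⟨by positivity, by linarith⟩ hC1
    rw [div_eq_div_iff hb0.ne' (by norm_num)] at this
    have hb8 : (8 : ℝ) = b := by
      have : π * (8 - b) = 0 := by linarith
      rcases mul_eq_zero.mp this with h | h
      · linarith
      · linarith
    exact_mod_cast hb8.symm
  exfalso
  have hb4 := lo 4 (by norm_num) (by omega)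
  push_cast at hb4
  rw [cos4] at hb4
  have hc0 : 0 < cos (π / a) := by
    have ha3 : (3 : ℝ) ≤ a := by exact_mod_cast (by omega : 3 ≤ a)
    apply cos_pos_of_mem_Ioo
    constructor
    · have : 0 ≤ π / a := by positivity
      linarith
    · exact div_lt_div_of_pos_left pi_pos (by norm_num) (by linarith)
  have hc1 := cos_le_one (π / a)
  by_cases h3 : a = 3
  · subst h3
    have c3 : cos (π / ((3 : ℤ) : ℝ)) = 1 / 2 := by push_cast; exact cos_pi_div_three
    rw [c3] at hg
    by_cases hb : b ≤ 8
    · have := up 8 hb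
      push_cast at this
      rw [cos8] at this
      have := aux_low (by norm_num) (by norm_num) hb4 this hg
      nlinarith
    · have := lo 9 (by norm_num) (by omega)
      push_cast at this
      have := aux_high (by norm_num) (by norm_num) (by norm_num) (l9.trans this) hg
      norm_num at this
  by_cases h4 : a = 4
  · subst h4
    have c3 : cos (π / ((4 : ℤ) : ℝ)) = √2 / 2 := by push_cast; exact cos_pi_div_four
    have q1 : (√2 : ℝ) < 1.4143 := by nlinarith
    have q2 : 1.4142 < (√2 : ℝ) := by nlinarith
    rw [c3] at hg
    by_cases hb : b ≤ 9
    · have := up 9 hb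
      push_cast at this
      have := aux_low (by linarith) (by linarith) hb4 (this.trans u9) hg
      nlinarith
    · have := lo 10 (by norm_num) (by omega)
      push_cast at this
      have := aux_high (by linarith) (by linarith) (by norm_num) (l10.trans this) hg
      nlinarith
  by_cases h5 : a = 5
  · subst h5
    have c3 : cos (π / ((5 : ℤ) : ℝ)) = (1 + √5) / 4 := by push_cast; exact cos_pi_div_five
    have s5 : (√5 : ℝ) ^ 2 = 5 := Real.sq_sqrt (by norm_num)
    have s5p : 0 < (√5 : ℝ) := by positivity
    have q1 : (√5 : ℝ) < 2.2361 := by nlinarith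
    have q2 : 2.236 < (√5 : ℝ) := by nlinarith
    rw [c3] at hg
    by_cases hb : b ≤ 11
    · have := up 11 hb
      push_cast at this
      have := aux_low (by linarith) (by linarith) hb4 (this.trans u11) hg
      have s53 : (√5 : ℝ) ^ 3 = 5 * √5 := by rw [pow_succ, s5]
      nlinarith
    · have := lo 12 (by norm_num) (by omega)
      push_cast at this
      have := aux_high (by linarith) (by linarith) (by norm_num) (l12.trans this) hg
      have s53 : (√5 : ℝ) ^ 3 = 5 * √5 := by rw [pow_succ, s5]
      nlinarith
  have ha6 : (6 : ℝ) ≤ a := by exact_mod_cast (by omega : 6 ≤ a)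
  have hclt : cos (π / a) < 1 := by
    rw [← cos_zero]
    apply cos_lt_cos_of_nonneg_of_le_pi le_rfl
    · rw [div_le_iff₀ (by linarith)]; nlinarith
    · positivity
  by_cases hb : b ≤ 2 * a
  · have h1 := up (2 * a) hb
    have e : 2 * π / ((2 * a : ℤ) : ℝ) = π / a := by push_cast; field_simp
    rw [e] at h1
    have := aux_low hc0.le hc1 hb4 h1 hg
    have k : 0 < (1 - cos (π / a)) ^ 2 * (3 * cos (π / a) + 1) := by
      apply mul_pos
      · exact pow_pos (by linarith) 2
      · linarith
    nlinarith
  · have h1 := lo (2 * a + 1) (by omega) (by omega)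
    push_cast at h1
    have hC0 : 0 ≤ cos (2 * π / (2 * (a : ℝ) + 1)) := by
      rw [← cos4]
      exact aux_cos_mono (by norm_num) (by linarith)
    have := aux_high hc0.le hc1 hC0 h1 hg
    linarith [aux_big ha6]

set_option maxHeartbeats 2000000 in
lemma aux_uniq (x y : ℝ) (hx1 : π / 3 ≤ x) (hx2 : x ≤ π / 2) (hy1 : 0 ≤ y) (hy2 : y ≤ π / 8)
    (h1 : f1 2 8 x y = 0) (h2 : f2 2 8 x y = 0) : x = π / 2 ∧ y = 0 := by
  have hpi := pi_pos
  have e1 : 2 * π / ((2 : ℤ) : ℝ) - 2 * x = π - 2 * x := by push_cast; ring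
  have hc0 : 0 ≤ cos x := cos_nonneg_of_mem_Icc ⟨by linarith, hx2⟩
  have hc1 : cos x ≤ 1 / 2 := by
    rw [← cos_pi_div_three]
    exact cos_le_cos_of_nonneg_of_le_pi (by linarith) (by linarith) hx1
  set z := 2 * π / ((8 : ℤ) : ℝ) - 2 * y with hz
  have hz' : z = π / 4 - 2 * y := by rw [hz]; push_cast; ring
  have hC : √2 / 2 ≤ cos z := by
    rw [← cos_pi_div_four]
    exact cos_le_cos_of_nonneg_of_le_pi (by linarith) (by linarith) (by linarith)
  have hs : √2 / 2 ≤ cos y := by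
    rw [← cos_pi_div_four]
    exact cos_le_cos_of_nonneg_of_le_pi (by linarith) (by linarith) (by linarith)
  have hs9 : 0.9 ≤ cos y := by
    have := Real.one_sub_sq_div_two_le_cos (x := y)
    have hy : y ≤ 0.4 := by linarith [pi_lt_d4]
    nlinarith
  have s2 : (√2 : ℝ) ^ 2 = 2 := Real.sq_sqrt (by norm_num)
  have s2p : 0 < (√2 : ℝ) := by positivity
  have ecos : cos (π - 2 * x) = 1 - 2 * cos x ^ 2 := by
    rw [cos_pi_sub, cos_two_mul]; ring
  unfold f1 B11 B00 at h1
  unfold f2 B11 B00 at h2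
  rw [← hz, e1, sin_sq, sin_sq, ecos] at h1
  rw [← hz, e1, sin_sq, sin_sq, ecos] at h2
  have hsl : cos y ≤ 1 := cos_le_one y
  have key : cos x = 0 ∧ cos y ^ 2 = 1 := by
    generalize cos x = c at *
    generalize cos y = s at *
    generalize cos z = C at *
    have hs2 : 1 / 2 ≤ s ^ 2 := by nlinarith
    have hC2 : 1 / 2 ≤ C ^ 2 := by nlinarith
    have hs0 : 0 < s := by linarith
    have hC0 : 0 < C := by linarith
    have hC12 : 1 / 2 < C := by nlinarith
    have hcc : c ^ 2 ≤ 1 / 4 := by nlinarith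
    have hs81 : 0.81 ≤ s ^ 2 := by nlinarith
    clear hs hC hx1 hx2 hy1 hy2 e1 hz hz' ecos
    clear_value z
    have hX : 1 - c ^ 2 - (1 - 2 * c ^ 2) ^ 2 - s ^ 2 - 2 * c * (1 - 2 * c ^ 2) * s < 0 := by
      have : 0 ≤ c * (1 - 2 * c ^ 2) * s :=
        mul_nonneg (mul_nonneg hc0 (by linarith)) hs0.le
      nlinarith
    have hrel : s ^ 2 = 1 - 4 * c ^ 2 * (1 - C ^ 2) := by
      have : (1 - c ^ 2 - (1 - 2 * c ^ 2) ^ 2 - s ^ 2 - 2 * c * (1 - 2 * c ^ 2) * s) *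
          (1 - s ^ 2 - 4 * c ^ 2 * (1 - C ^ 2)) = 0 := by
        linear_combination h1 + 4 * c ^ 2 * h2
      rcases mul_eq_zero.mp this with h | h
      · linarith
      · linarith
    have hc : c = 0 := by
      by_contra hne
      have hcp : 0 < c := lt_of_le_of_ne hc0 (Ne.symm hne)
      obtain ⟨q, hq⟩ : ∃ q, q = 1 - C ^ 2 := ⟨_, rfl⟩
      have hq2 : q ≤ 1 / 2 := by linarith
      have m1 : 0 ≤ 1 - 2 * q - c ^ 4 + 4 * c ^ 2 * q ^ 2 := by
        have hc4 : c ^ 4 ≤ c ^ 2 / 4 := by nlinarith [sq_nonneg c]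
        by_cases hq4 : q ≤ 1 / 4
        · have : 0 ≤ c ^ 2 * q ^ 2 := by positivity
          linarith
        · have : c ^ 2 * (1 / 16) ≤ c ^ 2 * q ^ 2 :=
            mul_le_mul_of_nonneg_left (by nlinarith) (sq_nonneg c)
          linarith
      have m2 : 0 < 2 * c * s * (C * (1 - c ^ 2) - q * (1 - 2 * c ^ 2)) := by
        apply mul_pos (by positivity)
        have u1 : 1 / 2 * (1 - c ^ 2) < C * (1 - c ^ 2) :=
          mul_lt_mul_of_pos_right hC12 (by linarith)
        have u2 : q * (1 - 2 * c ^ 2) ≤ 1 / 2 * (1 - 2 * c ^ 2) :=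
          mul_le_mul_of_nonneg_right hq2 (by linarith)
        nlinarith [sq_nonneg c]
      have hCq : C ^ 2 = 1 - q := by linarith
      have hsq : s ^ 2 = 1 - 4 * c ^ 2 * q := by rw [hrel, hq]
      rw [hCq, hsq] at h2
      linarith
    refine ⟨hc, ?_⟩
    rw [hrel, hc]; ring
  obtain ⟨k1, k2⟩ := key
  constructor
  · rw [← cos_pi_div_two] at k1
    exact injOn_cos ⟨by linarith, by linarith⟩ ⟨by linarith, by linarith⟩ k1
  · have k3 : sin y = 0 := by
      have := sin_sq_add_cos_sq y
      have : sin y ^ 2 = 0 := by linarith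
      exact pow_eq_zero_iff (by norm_num) |>.mp this
    by_contra hne
    have : 0 < sin y := sin_pos_of_pos_of_lt_pi (lt_of_le_of_ne hy1 (Ne.symm hne)) (by linarith)
    linarith

theorem stmt9 (a b : ℤ) (ha : 2 ≤ a) (hab : a < b)
    (h : f2 a b (π / (a : ℝ)) 0 = 0) :
    (f1 a b (π / (a : ℝ)) 0 = 0 ∧ f2 a b (π / (a : ℝ)) 0 = 0) ∧
    (∀ p : ℝ × ℝ, p ∈ Dom a b → f1 a b p.1 p.2 = 0 → f2 a b p.1 p.2 = 0 →
      p = (π / (a : ℝ), 0)) ∧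
    ¬ (0 < π / (a : ℝ) ∧ π / (a : ℝ) < π / (a : ℝ) ∧
        (0 : ℝ) < 0 ∧ (0 : ℝ) < π / (b : ℝ)) := by
  refine ⟨⟨?_, h⟩, ?_, fun hh => lt_irrefl _ hh.2.2.1⟩
  · have e1 : 2 * π / (a : ℝ) - 2 * (π / a) = 0 := by ring
    unfold f1
    rw [e1, sin_zero]; ring
  · obtain ⟨rfl, rfl⟩ := aux_class a b ha hab h
    rintro ⟨x, y⟩ hp h1 h2
    simp only [Dom, alphaI, if_true, Set.mem_prod, Set.mem_Icc] at hp
    obtain ⟨⟨hx1, hx2⟩, hy1, hy2⟩ := hp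
    push_cast at hy2
    obtain ⟨rfl, rfl⟩ := aux_uniq x y hx1 hx2 hy1 hy2 h1 h2
    push_cast
    rfl
end

section
/- Let a, b be integers with b > a ≥ 2. If f₂(α₁, 0) > 0 for every α₁ in the α₁-interval of D, then the edge-condition system f₁(α₁,β₁) = 0, f₂(α₁,β₁) = 0 has exactly one solution (α₁, β₁) in D. -/
open Real

set_option maxHeartbeats 1000000 in
/-- Order facts and the reduced equation satisfied by every solution in the domain. -/
lemma sol_props {A B x y p q : ℝ} (hB : 0 < B) (hAB : B < A) (hA : A ≤ π / 2) (hB3 : B ≤ π / 3)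
    (hp : p = 2 * A - 2 * x) (hq : q = 2 * B - 2 * y)
    (hx0 : 0 ≤ x) (hxA : x ≤ A) (hp2 : p ≤ π / 2) (hxp : 2 * A - x ≤ 2 * π / 3)
    (hy0 : 0 ≤ y) (hyB : y ≤ B) (hpq : p + q ≤ π) (hcase : B ≤ π / 4 ∨ π / 3 ≤ x)
    {b0 b1 : ℝ}
    (hb0 : b0 = cos x ^ 2 + cos p ^ 2 + cos y ^ 2 + 2 * cos x * cos p * cos y - 1)
    (hb1 : b1 = cos x ^ 2 + cos y ^ 2 + cos q ^ 2 + 2 * cos x * cos y * cos q - 1)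
    (e1 : b0 * sin y ^ 2 = b1 * sin p ^ 2) (e2 : b1 * sin x ^ 2 = b0 * sin q ^ 2) :
    ∃ r : ℝ, 0 < r ∧ r < 1 ∧ sin y = r * sin p ∧ sin q = r * sin x ∧ p < q ∧ q < x ∧ y ≤ p ∧
      cos x + cos y * cos q = r * (cos p + cos x * cos y) := by
  have hpi := pi_pos
  have hp0 : 0 ≤ p := by linarith
  have hq0 : 0 ≤ q := by linarith
  have sx := sin_nonneg_of_nonneg_of_le_pi hx0 (by linarith)
  have sp := sin_nonneg_of_nonneg_of_le_pi hp0 (by linarith)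
  have sy := sin_nonneg_of_nonneg_of_le_pi hy0 (by linarith)
  have sq := sin_nonneg_of_nonneg_of_le_pi hq0 (by linarith)
  have cx : 0 ≤ cos x := cos_nonneg_of_mem_Icc ⟨by linarith, by linarith⟩
  have cp : 0 ≤ cos p := cos_nonneg_of_mem_Icc ⟨by linarith, by linarith⟩
  have cy : 0 < cos y := cos_pos_of_mem_Ioo ⟨by linarith, by linarith⟩
  have tx := sin_sq_add_cos_sq x
  have tp := sin_sq_add_cos_sq p
  have ty := sin_sq_add_cos_sq y
  have tq := sin_sq_add_cos_sq q
  have hfac : b0 = (cos y + cos (x + p)) * (cos y + cos (x - p)) := by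
    rw [cos_add, cos_sub, hb0]
    have h1 : sin x ^ 2 = 1 - cos x ^ 2 := by linarith
    have h2 : sin p ^ 2 = 1 - cos p ^ 2 := by linarith
    linear_combination sin p ^ 2 * h1 + (1 - cos x ^ 2) * h2
  have hm : 0 < cos y + cos (x - p) := by
    have : 0 ≤ cos (x - p) := cos_nonneg_of_mem_Icc ⟨by linarith, by linarith⟩
    linarith
  have hpl : cos (π - (x + p)) ≤ cos y :=
    cos_le_cos_of_nonneg_of_le_pi hy0 (by linarith) (by linarith)
  rw [cos_pi_sub] at hpl
  have hb0n : 0 ≤ b0 := by rw [hfac]; exact mul_nonneg (by linarith) hm.le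
  have hsum : 0 < sin x ∨ 0 < sin p := by
    rcases eq_or_lt_of_le hx0 with h | h
    · right; exact sin_pos_of_pos_of_lt_pi (by linarith) (by linarith)
    · left; exact sin_pos_of_pos_of_lt_pi h (by linarith)
  have hb0p : 0 < b0 := by
    rcases eq_or_lt_of_le hb0n with h | h
    · exfalso
      have hb10 : b1 = 0 := by
        rw [← h] at e1 e2
        rcases hsum with h' | h'
        · rw [zero_mul] at e2
          exact (mul_eq_zero.1 e2).resolve_right (pow_pos h' 2).ne'
        · rw [zero_mul] at e1
          exact (mul_eq_zero.1 e1.symm).resolve_right (pow_pos h' 2).ne'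
      have h3 : cos y + cos (x + p) = 0 := by
        rw [hfac] at h
        rcases mul_eq_zero.1 h.symm with h3 | h3
        · exact h3
        · linarith
      have h4 : y = π - (x + p) := by
        apply injOn_cos ⟨hy0, by linarith⟩ ⟨by linarith, by linarith⟩
        rw [cos_pi_sub]; linarith
      have h5 : q = 0 := by linarith
      rw [h5, cos_zero] at hb1
      have h6 : b1 = (cos x + cos y) ^ 2 := by rw [hb1]; ring
      have h7 : 0 < (cos x + cos y) ^ 2 := by positivity
      rw [← h6, hb10] at h7
      exact lt_irrefl _ h7
    · exact h
  have hb1p : 0 < b1 := by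
    by_contra hcon
    push Not at hcon
    have h1 : b0 * sin y ^ 2 ≤ 0 := by rw [e1]; exact mul_nonpos_of_nonpos_of_nonneg hcon (by positivity)
    have h2 : b0 * sin q ^ 2 ≤ 0 := by rw [← e2]; exact mul_nonpos_of_nonpos_of_nonneg hcon (by positivity)
    have h3 : 0 < sin y ∨ 0 < sin q := by
      rcases eq_or_lt_of_le hy0 with h | h
      · right; exact sin_pos_of_pos_of_lt_pi (by linarith) (by linarith)
      · left; exact sin_pos_of_pos_of_lt_pi h (by linarith)
    rcases h3 with h3 | h3
    · have := mul_pos hb0p (pow_pos h3 2); linarith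
    · have := mul_pos hb0p (pow_pos h3 2); linarith
  set r := √(b1 / b0) with hr
  have hr0 : 0 < r := sqrt_pos.2 (div_pos hb1p hb0p)
  have hr2 : r ^ 2 * b0 = b1 := by
    rw [hr, sq_sqrt (div_pos hb1p hb0p).le]; field_simp
  have hsy : sin y = r * sin p := by
    rw [← sq_eq_sq₀ sy (by positivity)]
    apply mul_left_cancel₀ hb0p.ne'
    rw [e1, ← hr2]; ring
  have hsq : sin q = r * sin x := by
    rw [← sq_eq_sq₀ sq (by positivity)]
    apply mul_left_cancel₀ hb0p.ne'
    rw [← e2, ← hr2]; ring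
  have hcq : -cos p ≤ cos q := by
    rw [← cos_pi_sub]
    exact cos_le_cos_of_nonneg_of_le_pi hq0 (by linarith) (by linarith)
  have hcq2 : -(1/2) ≤ cos q := by
    rw [← cos_pi_div_three, ← cos_pi_sub]
    exact cos_le_cos_of_nonneg_of_le_pi hq0 (by linarith) (by linarith)
  have hC : 0 < cos p + cos q + 2 * cos x * cos y := by
    rcases eq_or_lt_of_le (hxA.trans hA) with h | h
    · have : p = 0 := by linarith
      rw [this, cos_zero]
      have : 0 ≤ 2 * cos x * cos y := by positivity
      linarith
    · have : 0 < cos x := cos_pos_of_mem_Ioo ⟨by linarith, h⟩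
      have : 0 < 2 * cos x * cos y := by positivity
      linarith
  have hdiff : b0 - b1 = (cos p - cos q) * (cos p + cos q + 2 * cos x * cos y) := by
    rw [hb0, hb1]; ring
  have hr1 : r < 1 := by
    by_contra hcon
    push Not at hcon
    have h1 : b0 ≤ b1 := by 
      rw [← hr2]
      exact le_mul_of_one_le_left hb0n (one_le_pow₀ hcon)
    have h2 : cos p ≤ cos q := by
      by_contra h; push Not at h
      have := mul_pos (sub_pos.2 h) hC
      linarith
    have h3 : q ≤ p := by
      by_contra h; push Not at h
      have := cos_lt_cos_of_nonneg_of_le_pi hp0 (by linarith) h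
      linarith
    have h4 : p ≤ y := by
      by_contra h; push Not at h
      have := sin_lt_sin_of_lt_of_le_pi_div_two (by linarith) hp2 h
      rw [hsy] at this
      exact absurd (le_mul_of_one_le_left sp hcon) (not_le.2 this)
    have h5 : x ≤ q := by
      by_contra h; push Not at h
      have := sin_lt_sin_of_lt_of_le_pi_div_two (by linarith) (by linarith) h
      rw [hsq] at this
      exact absurd (le_mul_of_one_le_left sx hcon) (not_le.2 this)
    linarith
  have hpq' : p < q := by
    by_contra h; push Not at h
    have h1 := cos_le_cos_of_nonneg_of_le_pi hq0 (by linarith) h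
    have h2 : (cos p - cos q) * (cos p + cos q + 2 * cos x * cos y) ≤ 0 :=
      mul_nonpos_of_nonpos_of_nonneg (by linarith) hC.le
    have h3 : r ^ 2 * b0 < b0 := mul_lt_of_lt_one_left hb0p (pow_lt_one₀ hr0.le hr1 (by norm_num))
    linarith only [h2, h3, hdiff, hr2]
  have hyp : y ≤ p := by
    by_contra h; push Not at h
    have := sin_lt_sin_of_lt_of_le_pi_div_two (by linarith) (by linarith) h
    rw [hsy] at this
    exact absurd (mul_le_of_le_one_left sp hr1.le) (not_le.2 this)
  have hq2 : q ≤ π / 2 := by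
    rcases hcase with h | h
    · linarith
    by_contra hcon; push Not at hcon
    have cq : cos q ≤ 0 := cos_nonpos_of_pi_div_two_le_of_le hcon.le (by linarith)
    have cx2 : cos x ≤ 1 / 2 := by
      rw [← cos_pi_div_three]
      exact cos_le_cos_of_nonneg_of_le_pi (by linarith) (by linarith) h
    have sy2 : sin y ≤ 1 / 2 := by
      rw [← sin_pi_div_six]
      exact sin_le_sin_of_le_of_le_pi_div_two (by linarith) (by linarith) (by linarith)
    have cy1 := cos_le_one y
    have hcc1 : cos y * cos q ≤ 0 := mul_nonpos_of_nonneg_of_nonpos cy.le cq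
    have hcc2 : -(1/2) ≤ cos y * cos q := by nlinarith only [cy1, cy, cq, hcq2]
    have k1 : b1 ≤ 1 / 4 := by
      have : b1 = (cos x + cos y * cos q) ^ 2 - sin y ^ 2 * sin q ^ 2 := by
        rw [hb1]
        have h1 : sin y ^ 2 = 1 - cos y ^ 2 := by linarith
        have h2 : sin q ^ 2 = 1 - cos q ^ 2 := by linarith
        rw [h1, h2]; ring
      have h2 : 0 ≤ sin y ^ 2 * sin q ^ 2 := by positivity
      nlinarith only [this, h2, hcc1, hcc2, cx, cx2]
    have hr34 : 3 / 4 ≤ r ^ 2 := by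
      have h1 : 3 / 4 ≤ sin q ^ 2 := by nlinarith only [tq, cq, hcq2]
      have h2 : sin q ^ 2 = r ^ 2 * sin x ^ 2 := by rw [hsq]; ring
      have h3 : sin x ^ 2 ≤ 1 := by nlinarith only [tx, sq_nonneg (cos x)]
      nlinarith only [h1, h2, h3, sq_nonneg r]
    have h3 : sin y ^ 2 = r ^ 2 * sin p ^ 2 := by rw [hsy]; ring
    have h4 : sin y ^ 2 ≤ 1 / 4 := by nlinarith only [sy, sy2]
    have h5 : sin p ^ 2 ≤ 1 / 3 := by nlinarith only [h3, h4, hr34, sq_nonneg (sin p)]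
    have h6 : 5 / 12 ≤ b0 := by
      have h7 : 0 ≤ 2 * cos x * cos p * cos y := by positivity
      rw [hb0]; nlinarith only [sq_nonneg (cos x), h7, h4, h5, tp, ty]
    nlinarith only [h6, hr34, k1, hr2]
  have hqx : q < x := by
    by_contra h; push Not at h
    have h1 := sin_le_sin_of_le_of_le_pi_div_two (by linarith) hq2 h
    have h2 : 0 < sin q := sin_pos_of_pos_of_lt_pi (by linarith) (by linarith)
    nlinarith only [h1, h2, hsq, hr0, hr1, sx]
  have cq : 0 ≤ cos q := cos_nonneg_of_mem_Icc ⟨by linarith, by linarith⟩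
  refine ⟨r, hr0, hr1, hsy, hsq, hpq', hqx, hyp, ?_⟩
  rw [← sq_eq_sq₀ (by positivity) (by positivity)]
  have g1 : (cos x + cos y * cos q) ^ 2 = b1 + sin y ^ 2 * sin q ^ 2 := by
    rw [hb1]
    have h1 : sin y ^ 2 = 1 - cos y ^ 2 := by linarith
    have h2 : sin q ^ 2 = 1 - cos q ^ 2 := by linarith
    rw [h1, h2]; ring
  have g0 : (cos p + cos x * cos y) ^ 2 = b0 + sin y ^ 2 * sin x ^ 2 := by
    rw [hb0]
    have h1 : sin y ^ 2 = 1 - cos y ^ 2 := by linarith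
    have h2 : sin x ^ 2 = 1 - cos x ^ 2 := by linarith
    rw [h1, h2]; ring
  rw [g1, mul_pow, g0, hsq, ← hr2]; ring

set_option maxHeartbeats 1000000 in
/-- The scaling factor is strictly increasing along the curve. -/
lemma r_lt {A B x y x' y' r r' : ℝ} (hA : A ≤ π / 2) (hBA : B < A)
    (hy0' : 0 ≤ y') (hxx : x < x') (hyy : y' < y) (hxA' : x' ≤ A) (hyB : y ≤ B)
    (hr : 0 < r)
    (h1 : sin y = r * sin (2 * A - 2 * x)) (h2 : sin (2 * B - 2 * y) = r * sin x)
    (h1' : sin y' = r' * sin (2 * A - 2 * x')) (h2' : sin (2 * B - 2 * y') = r' * sin x')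
    (hp : 2 * A - 2 * x < 2 * B - 2 * y) (hq : 2 * B - 2 * y < x)
    (hp' : 2 * A - 2 * x' < 2 * B - 2 * y') (hq' : 2 * B - 2 * y' < x') : r < r' := by
  by_contra hcon
  push Not at hcon
  have hpi := pi_pos
  have sx' : 0 ≤ sin x' := sin_nonneg_of_nonneg_of_le_pi (by linarith) (by linarith)
  have sp' : 0 ≤ sin (2 * A - 2 * x') := sin_nonneg_of_nonneg_of_le_pi (by linarith) (by linarith)
  have k1 : r * (sin (2 * A - 2 * x) - sin (2 * A - 2 * x')) ≤ sin y - sin y' := by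
    rw [h1, h1']; nlinarith only [hcon, sp']
  have k2 : sin (2 * B - 2 * y') - sin (2 * B - 2 * y) ≤ r * (sin x' - sin x) := by
    rw [h2, h2']; nlinarith only [hcon, sx']
  rw [sin_sub_sin, sin_sub_sin] at k1 k2
  set d := (x' - x) / 2 with hd
  set e := (y - y') / 2 with he
  rw [show (2 * A - 2 * x - (2 * A - 2 * x')) / 2 = 2 * d by rw [hd]; ring, sin_two_mul] at k1
  rw [show (2 * B - 2 * y' - (2 * B - 2 * y)) / 2 = 2 * e by rw [he]; ring, sin_two_mul] at k2
  set mp := (2 * A - 2 * x + (2 * A - 2 * x')) / 2 with hmp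
  set mq := (2 * B - 2 * y' + (2 * B - 2 * y)) / 2 with hmq
  set my := (y + y') / 2 with hmy
  set mx := (x' + x) / 2 with hmx
  have sd : 0 < sin d := sin_pos_of_pos_of_lt_pi (by linarith) (by linarith)
  have se : 0 < sin e := sin_pos_of_pos_of_lt_pi (by linarith) (by linarith)
  have cd : 1 / 2 < cos d * cos d := by
    have h : cos (π / 4) < cos d := cos_lt_cos_of_nonneg_of_le_pi (by linarith) (by linarith) (by linarith)
    have h0 : 0 < cos (π / 4) := cos_pos_of_mem_Ioo ⟨by linarith, by linarith⟩
    have h' : cos (π / 4) ^ 2 = 1 / 2 := by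
      rw [cos_pi_div_four, div_pow, sq_sqrt (by norm_num)]; norm_num
    nlinarith only [h, h0, h']
  have ce : 1 / 2 < cos e * cos e := by
    have h : cos (π / 4) < cos e := cos_lt_cos_of_nonneg_of_le_pi (by linarith) (by linarith) (by linarith)
    have h0 : 0 < cos (π / 4) := cos_pos_of_mem_Ioo ⟨by linarith, by linarith⟩
    have h' : cos (π / 4) ^ 2 = 1 / 2 := by
      rw [cos_pi_div_four, div_pow, sq_sqrt (by norm_num)]; norm_num
    nlinarith only [h, h0, h']
  have cd0 : 0 < cos d := cos_pos_of_mem_Ioo ⟨by linarith, by linarith⟩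
  have ce0 : 0 < cos e := cos_pos_of_mem_Ioo ⟨by linarith, by linarith⟩
  have cde : 1 / 2 < cos d * cos e := by nlinarith only [mul_pos cd0 ce0, mul_lt_mul'' cd ce (by norm_num) (by norm_num)]
  have cmx : 0 < cos mx := cos_pos_of_mem_Ioo ⟨by linarith, by linarith⟩
  have cmq : cos mx < cos mq := cos_lt_cos_of_nonneg_of_le_pi (by linarith) (by linarith) (by linarith)
  have cmp : 1 / 2 ≤ cos mp := by
    rw [← cos_pi_div_three]
    exact cos_le_cos_of_nonneg_of_le_pi (by linarith) (by linarith) (by linarith)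
  have cmy := cos_le_one my
  have cmy0 : 0 < cos my := cos_pos_of_mem_Ioo ⟨by linarith, by linarith⟩
  have m1 : r * (2 * sin d * cos d * cos mp) ≤ sin e * cos my := by linarith
  have m2 : 2 * sin e * cos e * cos mq ≤ r * (sin d * cos mx) := by linarith
  have m3 : (r * (2 * sin d * cos d * cos mp)) * (2 * sin e * cos e * cos mq) ≤
      (sin e * cos my) * (r * (sin d * cos mx)) :=
    mul_le_mul m1 m2 (by have := cmx.trans cmq; positivity) (by positivity)
  have m4 : 4 * (cos d * cos e) * cos mp * cos mq ≤ cos my * cos mx := by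
    have hpos : 0 < r * sin d * sin e := by positivity
    refine le_of_mul_le_mul_left ?_ hpos
    linarith only [m3]
  have m5 : 1 * cos mq ≤ 4 * (cos d * cos e) * cos mp * cos mq := by
    apply mul_le_mul_of_nonneg_right _ (by linarith)
    nlinarith only [cde, cmp]
  nlinarith only [m4, m5, cmq, cmx, cmy, cmy0]

set_option maxHeartbeats 1000000 in
lemma uniq_lt {A B x y x' y' r r' : ℝ} (hA : A ≤ π / 2) (hBA : B < A)
    (hy0 : 0 ≤ y) (hy0' : 0 ≤ y') (hxx : x < x') (hxA' : x' ≤ A) (hyB : y ≤ B) (hyB' : y' ≤ B)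
    (hr : 0 < r) (hr1' : r' < 1) (hr' : 0 < r')
    (h1 : sin y = r * sin (2 * A - 2 * x)) (h2 : sin (2 * B - 2 * y) = r * sin x)
    (h1' : sin y' = r' * sin (2 * A - 2 * x')) (h2' : sin (2 * B - 2 * y') = r' * sin x')
    (hp : 2 * A - 2 * x < 2 * B - 2 * y) (hq : 2 * B - 2 * y < x)
    (hp' : 2 * A - 2 * x' < 2 * B - 2 * y') (hq' : 2 * B - 2 * y' < x')
    (hyp : y ≤ 2 * A - 2 * x)
    (e : cos x + cos y * cos (2 * B - 2 * y) = r * (cos (2 * A - 2 * x) + cos x * cos y))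
    (e' : cos x' + cos y' * cos (2 * B - 2 * y') =
      r' * (cos (2 * A - 2 * x') + cos x' * cos y')) : False := by
  have hpi := pi_pos
  have hyy : y' < y := by
    by_contra h; push Not at h
    have s1 : sin x < sin x' := sin_lt_sin_of_lt_of_le_pi_div_two (by linarith) (by linarith) hxx
    have s2 : sin y ≤ sin y' := sin_le_sin_of_le_of_le_pi_div_two (by linarith) (by linarith) h
    have s3 : sin (2 * A - 2 * x') < sin (2 * A - 2 * x) :=
      sin_lt_sin_of_lt_of_le_pi_div_two (by linarith) (by linarith) (by linarith)
    have s4 : sin (2 * B - 2 * y') ≤ sin (2 * B - 2 * y) :=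
      sin_le_sin_of_le_of_le_pi_div_two (by linarith) (by linarith) (by linarith)
    have p1 : 0 < sin x := sin_pos_of_pos_of_lt_pi (by linarith) (by linarith)
    have p2 : 0 ≤ sin (2 * A - 2 * x') := sin_nonneg_of_nonneg_of_le_pi (by linarith) (by linarith)
    have q1 : r' < r := by
      by_contra hh; push Not at hh
      have t1 : r * sin x ≤ r' * sin x := mul_le_mul_of_nonneg_right hh p1.le
      have t2 : r' * sin x < r' * sin x' := mul_lt_mul_of_pos_left s1 hr'
      linarith only [t1, t2, s4, h2, h2']
    have q2 : r * sin (2 * A - 2 * x) < r * sin (2 * A - 2 * x) := by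
      calc r * sin (2 * A - 2 * x) ≤ r' * sin (2 * A - 2 * x') := by rw [← h1, ← h1']; exact s2
        _ ≤ r * sin (2 * A - 2 * x') := mul_le_mul_of_nonneg_right q1.le p2
        _ < _ := mul_lt_mul_of_pos_left s3 hr
    exact lt_irrefl _ q2
  have hrr := r_lt hA hBA hy0' hxx hyy hxA' hyB hr h1 h2 h1' h2' hp hq hp' hq'
  have cx' : 0 ≤ cos x' := cos_nonneg_of_mem_Icc ⟨by linarith, by linarith⟩
  have cxx : cos x' < cos x := cos_lt_cos_of_nonneg_of_le_pi (by linarith) (by linarith) hxx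
  have cyy : cos y < cos y' := cos_lt_cos_of_nonneg_of_le_pi (by linarith) (by linarith) hyy
  have cy : 0 < cos y := cos_pos_of_mem_Ioo ⟨by linarith, by linarith⟩
  have cy1 := cos_le_one y'
  have cpp : cos (2 * A - 2 * x) < cos (2 * A - 2 * x') :=
    cos_lt_cos_of_nonneg_of_le_pi (by linarith) (by linarith) (by linarith)
  have cp : 0 < cos (2 * A - 2 * x) := cos_pos_of_mem_Ioo ⟨by linarith, by linarith⟩
  have c1 : cos (2 * B - 2 * y' + y') ≤ cos (2 * B - 2 * y + y) :=
    cos_le_cos_of_nonneg_of_le_pi (by linarith) (by linarith) (by linarith)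
  have c2 : cos (2 * B - 2 * y' - y') ≤ cos (2 * B - 2 * y - y) :=
    cos_le_cos_of_nonneg_of_le_pi (by linarith) (by linarith) (by linarith)
  rw [cos_add (2 * B - 2 * y'), cos_add (2 * B - 2 * y)] at c1
  rw [cos_sub (2 * B - 2 * y'), cos_sub (2 * B - 2 * y)] at c2
  have c3 : cos y' * cos (2 * B - 2 * y') ≤ cos y * cos (2 * B - 2 * y) := by linarith
  have g1 : r * cos y < r' * cos y' := mul_lt_mul hrr cyy.le cy hr'.le
  have g2 : r' * cos y' < 1 := by nlinarith
  have g3 : r * cos (2 * A - 2 * x) < r' * cos (2 * A - 2 * x') := mul_lt_mul hrr cpp.le cp hr'.le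
  have g4 : cos x' * (1 - r' * cos y') ≤ cos x * (1 - r * cos y) :=
    mul_le_mul cxx.le (by linarith) (by linarith) (by linarith)
  linarith

set_option maxHeartbeats 1000000 in
lemma curve_mono {B x y : ℝ} (hB : 0 < B) (hB3 : B ≤ π / 3) (hx : 0 ≤ x) (hxy : x < y) (hy : y ≤ B) :
    sin x * sin (2 * B - 2 * y) < sin y * sin (2 * B - 2 * x) := by
  have hpi := pi_pos
  have s1 : sin x < sin y := sin_lt_sin_of_lt_of_le_pi_div_two (by linarith) (by linarith) hxy
  have sx : 0 ≤ sin x := sin_nonneg_of_nonneg_of_le_pi hx (by linarith)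
  rcases le_total B (π / 4) with h | h
  · have s2 : sin (2 * B - 2 * y) < sin (2 * B - 2 * x) :=
      sin_lt_sin_of_lt_of_le_pi_div_two (by linarith) (by linarith) (by linarith)
    have s3 : 0 ≤ sin (2 * B - 2 * y) := sin_nonneg_of_nonneg_of_le_pi (by linarith) (by linarith)
    nlinarith
  · have c : cos (2 * B) ≤ 0 := cos_nonpos_of_pi_div_two_le_of_le (by linarith) (by linarith)
    have s : 0 < sin (2 * B) := sin_pos_of_pos_of_lt_pi (by linarith) (by linarith)
    have cxy : cos y ≤ cos x := cos_le_cos_of_nonneg_of_le_pi (by linarith) (by linarith) hxy.le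
    have key : sin y * sin (2 * B - 2 * x) - sin x * sin (2 * B - 2 * y) =
        sin (2 * B) * ((sin y - sin x) * (1 + 2 * (sin x * sin y)))
          + (-cos (2 * B)) * (2 * (sin x * sin y) * (cos x - cos y)) := by
      rw [sin_sub, sin_sub, sin_two_mul x, sin_two_mul y, cos_two_mul x, cos_two_mul y]
      have h1 := sin_sq_add_cos_sq x
      have h2 := sin_sq_add_cos_sq y
      have h1' : cos x ^ 2 = 1 - sin x ^ 2 := by linarith
      have h2' : cos y ^ 2 = 1 - sin y ^ 2 := by linarith
      rw [h1', h2']; ring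
    have hss : 0 ≤ sin x * sin y := mul_nonneg sx (by linarith)
    have k1 : 0 < sin (2 * B) * ((sin y - sin x) * (1 + 2 * (sin x * sin y))) :=
      mul_pos s (mul_pos (by linarith) (by linarith))
    have k2 : 0 ≤ (-cos (2 * B)) * (2 * (sin x * sin y) * (cos x - cos y)) :=
      mul_nonneg (by linarith) (mul_nonneg (by linarith) (by linarith))
    linarith

set_option maxHeartbeats 1000000 in
lemma exists_on_curve {A B lo : ℝ} (hB : 0 < B) (hB3 : B ≤ π / 3) (hlo : lo ≤ A)
    (hs1 : ∀ x ∈ Set.Icc lo A, 0 ≤ sin x) (hs2 : ∀ x ∈ Set.Icc lo A, 0 ≤ sin (2 * A - 2 * x))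
    (hs : ∀ x ∈ Set.Icc lo A, 0 < sin x + sin (2 * A - 2 * x))
    (F : ℝ → ℝ → ℝ) (hF : Continuous fun z : ℝ × ℝ => F z.1 z.2)
    (hr : 0 < F A 0)
    (hl : ∀ y ∈ Set.Icc 0 B, sin lo * sin y = sin (2 * A - 2 * lo) * sin (2 * B - 2 * y) → F lo y < 0) :
    ∃ x ∈ Set.Icc lo A, ∃ y ∈ Set.Icc 0 B,
      sin x * sin y = sin (2 * A - 2 * x) * sin (2 * B - 2 * y) ∧ F x y = 0 := by
  have hpi := pi_pos
  have n1 : ∀ y ∈ Set.Icc 0 B, 0 ≤ sin y := fun y hy =>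
    sin_nonneg_of_nonneg_of_le_pi hy.1 (by linarith [hy.2])
  have n2 : ∀ y ∈ Set.Icc 0 B, 0 ≤ sin (2 * B - 2 * y) := fun y hy =>
    sin_nonneg_of_nonneg_of_le_pi (by linarith [hy.2]) (by linarith [hy.1])
  have n3 : ∀ y ∈ Set.Icc 0 B, 0 < sin y + sin (2 * B - 2 * y) := by
    intro y hy
    rcases eq_or_lt_of_le hy.1 with h | h
    · have := sin_pos_of_pos_of_lt_pi (x := 2 * B - 2 * y) (by linarith) (by linarith)
      linarith [n1 y hy]
    · have := sin_pos_of_pos_of_lt_pi h (by linarith [hy.2])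
      linarith [n2 y hy]
  let v : Set.Icc (0:ℝ) B → Set.Icc (0:ℝ) 1 := fun y =>
    ⟨sin y / (sin y + sin (2 * B - 2 * y)), div_nonneg (n1 y y.2) (n3 y y.2).le,
      (div_le_one (n3 y y.2)).2 (by linarith [n2 y y.2])⟩
  have vmono : StrictMono v := by
    intro y z hyz
    have hyz' : (y:ℝ) < z := hyz
    change sin (y:ℝ) / (sin y + sin (2 * B - 2 * y)) < sin (z:ℝ) / (sin z + sin (2 * B - 2 * z))
    rw [div_lt_div_iff₀ (n3 y y.2) (n3 z z.2)]
    have := curve_mono hB hB3 y.2.1 hyz' z.2.2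
    linarith
  have vsurj : Function.Surjective v := by
    intro t
    have hc : ContinuousOn (fun y : ℝ => sin y / (sin y + sin (2 * B - 2 * y))) (Set.Icc 0 B) := by
      apply ContinuousOn.div (by fun_prop) (by fun_prop)
      intro y hy; exact (n3 y hy).ne'
    have hsB : 0 < sin B := sin_pos_of_pos_of_lt_pi hB (by linarith)
    have := intermediate_value_Icc hB.le hc
    have ht : (t:ℝ) ∈ Set.Icc (sin 0 / (sin 0 + sin (2 * B - 2 * 0)))
        (sin B / (sin B + sin (2 * B - 2 * B))) := by
      simp only [sin_zero, zero_div, sub_self, add_zero, div_self hsB.ne']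
      exact t.2
    obtain ⟨y, hy, hyt⟩ := this ht
    exact ⟨⟨y, hy⟩, Subtype.ext hyt⟩
  let E := StrictMono.orderIsoOfSurjective v vmono vsurj
  let u : Set.Icc lo A → Set.Icc (0:ℝ) 1 := fun x =>
    ⟨sin (2 * A - 2 * x) / (sin x + sin (2 * A - 2 * x)), div_nonneg (hs2 x x.2) (hs x x.2).le,
      (div_le_one (hs x x.2)).2 (by linarith [hs1 x x.2])⟩
  have hu : Continuous u := by
    apply Continuous.subtype_mk
    apply Continuous.div (by fun_prop) (by fun_prop)
    intro x; exact (hs x x.2).ne'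
  let g : Set.Icc lo A → Set.Icc (0:ℝ) B := fun x => E.symm (u x)
  have hg : Continuous g := E.symm.continuous.comp hu
  have hcurve : ∀ x : Set.Icc lo A,
      sin (x:ℝ) * sin (g x : ℝ) = sin (2 * A - 2 * x) * sin (2 * B - 2 * (g x : ℝ)) := by
    intro x
    have h1 : v (g x) = u x := E.apply_symm_apply (u x)
    have h2 : sin (g x:ℝ) / (sin (g x:ℝ) + sin (2 * B - 2 * (g x:ℝ))) =
      sin (2 * A - 2 * x) / (sin x + sin (2 * A - 2 * x)) := congrArg Subtype.val h1
    rw [div_eq_div_iff (n3 _ (g x).2).ne' (hs x x.2).ne'] at h2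
    linarith
  have hG : Continuous fun x : Set.Icc lo A => F x (g x) :=
    hF.comp (continuous_subtype_val.prodMk (continuous_subtype_val.comp hg))
  let L : Set.Icc lo A := ⟨lo, le_refl _, hlo⟩
  let R : Set.Icc lo A := ⟨A, hlo, le_refl _⟩
  have hgR : (g R : ℝ) = 0 := by
    have h1 := hcurve R
    have h2 := hs A R.2
    simp only [R, sub_self, sin_zero, zero_mul, add_zero] at h1 h2
    rcases mul_eq_zero.1 h1 with h | h
    · linarith
    · by_contra hne
      have h3 : 0 < (g R : ℝ) := lt_of_le_of_ne (g R).2.1 (Ne.symm hne)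
      have h4 := sin_pos_of_pos_of_lt_pi h3 (by linarith [(g R).2.2])
      simp only [R] at h4
      linarith
  have hL : F L (g L) < 0 := hl _ (g L).2 (hcurve L)
  have hR : 0 < F R (g R) := by rw [hgR]; exact hr
  have : PreconnectedSpace (Set.Icc lo A) := Subtype.preconnectedSpace isPreconnected_Icc
  obtain ⟨x, hx⟩ := mem_range_of_exists_le_of_exists_ge hG ⟨L, hL.le⟩ ⟨R, hR.le⟩
  exact ⟨x, x.2, g x, (g x).2, hcurve x, hx⟩

set_option maxHeartbeats 1000000 in
lemma zero_of_curve {s p y q b0 b1 : ℝ} (hs : 0 < s + p) (hs0 : 0 ≤ s) (_hp : 0 ≤ p)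
    (hc : s * y = p * q)
    (h : b0 * (y ^ 2 + q ^ 2) - b1 * (s ^ 2 + p ^ 2) = 0) :
    b0 * y ^ 2 = b1 * p ^ 2 ∧ b1 * s ^ 2 = b0 * q ^ 2 := by
  have hn : 0 < s ^ 2 + p ^ 2 := by
    rcases eq_or_lt_of_le hs0 with h | h
    · have : 0 < p := by linarith
      positivity
    · positivity
  have h1 : y ^ 2 * (s ^ 2 + p ^ 2) = p ^ 2 * (y ^ 2 + q ^ 2) := by
    linear_combination (s * y + p * q) * hc
  have h2 : q ^ 2 * (s ^ 2 + p ^ 2) = s ^ 2 * (y ^ 2 + q ^ 2) := by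
    linear_combination -(s * y + p * q) * hc
  constructor
  · apply mul_right_cancel₀ hn.ne'
    linear_combination b0 * h1 + p ^ 2 * h
  · apply mul_right_cancel₀ hn.ne'
    linear_combination -b0 * h2 - s ^ 2 * h

/-- `b₀ (sin²β₁ + sin²β₂) - b₁ (sin²α₁ + sin²α₂)`, where `b₀ = -B₀₀`, `b₁ = -B₁₁`. -/
noncomputable def Psi (A B x y : ℝ) : ℝ :=
  (cos x ^ 2 + cos (2 * A - 2 * x) ^ 2 + cos y ^ 2 + 2 * cos x * cos (2 * A - 2 * x) * cos y - 1)
      * (sin y ^ 2 + sin (2 * B - 2 * y) ^ 2)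
    - (cos x ^ 2 + cos y ^ 2 + cos (2 * B - 2 * y) ^ 2 + 2 * cos x * cos y * cos (2 * B - 2 * y) - 1)
      * (sin x ^ 2 + sin (2 * A - 2 * x) ^ 2)

lemma left4 {A B y : ℝ} (hB : 0 < B) (hAB : B < A) (hA : A ≤ π / 4) (hy : y ∈ Set.Icc 0 B)
    (hc : sin 0 * sin y = sin (2 * A - 2 * 0) * sin (2 * B - 2 * y)) : Psi A B 0 y < 0 := by
  have hpi := pi_pos
  have hyB : y = B := by
    by_contra h
    have h1 : y < B := lt_of_le_of_ne hy.2 h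
    have h2 := sin_pos_of_pos_of_lt_pi (x := 2 * B - 2 * y) (by linarith) (by linarith [hy.1])
    have h3 := sin_pos_of_pos_of_lt_pi (x := 2 * A - 2 * 0) (by linarith) (by linarith)
    have := mul_pos h3 h2
    rw [← hc, sin_zero, zero_mul] at this
    exact lt_irrefl _ this
  subst hyB
  have cB : 0 < cos y := cos_pos_of_mem_Ioo ⟨by linarith, by linarith⟩
  have cA : 0 ≤ cos (2 * A) := cos_nonneg_of_mem_Icc ⟨by linarith, by linarith⟩
  have cA1 := cos_le_one (2 * A)
  have sB : 0 < sin y := sin_pos_of_pos_of_lt_pi hB (by linarith)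
  have sAB : sin y < sin (2 * A) := sin_lt_sin_of_lt_of_le_pi_div_two (by linarith) (by linarith) (by linarith)
  have h1 : (cos y + cos (2 * A)) * sin y < (1 + cos y) * sin (2 * A) :=
    mul_lt_mul' (by linarith) sAB sB.le (by linarith)
  have h2 := pow_lt_pow_left₀ h1 (by positivity) (two_ne_zero)
  simp only [Psi, mul_zero, sub_zero, sub_self, sin_zero, cos_zero]
  linarith only [h2]

lemma left3 {B y : ℝ} (hB : 0 < B) (hB4 : B ≤ π / 4) (hy : y ∈ Set.Icc 0 B)
    (hc : sin (π / 12) * sin y = sin (2 * (π / 3) - 2 * (π / 12)) * sin (2 * B - 2 * y)) :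
    Psi (π / 3) B (π / 12) y < 0 := by
  have hpi := pi_pos
  have e : 2 * (π / 3) - 2 * (π / 12) = π / 2 := by ring
  rw [e, sin_pi_div_two, one_mul] at hc
  simp only [Psi, e, sin_pi_div_two, cos_pi_div_two]
  have s12 : sin (π / 12) ≤ 1 / 2 := by
    rw [← sin_pi_div_six]
    exact sin_le_sin_of_le_of_le_pi_div_two (by linarith) (by linarith) (by linarith)
  have s12' : 0 ≤ sin (π / 12) := sin_nonneg_of_nonneg_of_le_pi (by linarith) (by linarith)
  have c12 : 0 ≤ cos (π / 12) := cos_nonneg_of_mem_Icc ⟨by linarith, by linarith⟩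
  have t12 := sin_sq_add_cos_sq (π / 12)
  have sy : 0 ≤ sin y := sin_nonneg_of_nonneg_of_le_pi hy.1 (by linarith [hy.2])
  have cy : 0 ≤ cos y := cos_nonneg_of_mem_Icc ⟨by linarith [hy.1], by linarith [hy.2]⟩
  have cq : 0 ≤ cos (2 * B - 2 * y) :=
    cos_nonneg_of_mem_Icc ⟨by linarith [hy.2], by linarith [hy.1]⟩
  have ty := sin_sq_add_cos_sq y
  have tq := sin_sq_add_cos_sq (2 * B - 2 * y)
  have sy2 : sin y ^ 2 ≤ 1 / 2 := by
    have h1 : sin y ≤ sin (π / 4) :=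
      sin_le_sin_of_le_of_le_pi_div_two (by linarith [hy.1]) (by linarith) (by linarith [hy.2])
    have h' : sin (π / 4) ^ 2 = 1 / 2 := by
      rw [sin_pi_div_four, div_pow, sq_sqrt (by norm_num)]; norm_num
    rw [← h']
    exact pow_le_pow_left₀ sy h1 2
  generalize sin (π / 12) = s at *
  generalize cos (π / 12) = c at *
  generalize sin (2 * B - 2 * y) = sq at *
  generalize cos (2 * B - 2 * y) = w at *
  generalize sin y = t at *
  generalize cos y = k at *
  subst hc
  have hs2 : s ^ 2 ≤ 1 / 4 := by nlinarith only [s12, s12']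
  have hprod : 0 ≤ 2 * c * k * w := by positivity
  have hk : k ^ 2 = 1 - t ^ 2 := by linarith
  have hcc : c ^ 2 = 1 - s ^ 2 := by linarith
  have hq : w ^ 2 = 1 - (s * t) ^ 2 := by linarith
  rw [hk, hcc, hq]
  have i1 : 0 ≤ s ^ 2 := sq_nonneg s
  have i2 : 0 ≤ t ^ 2 := sq_nonneg t
  have j1 : t ^ 2 - (2 - s ^ 2 - t ^ 2 - s ^ 2 * t ^ 2) < 0 := by nlinarith only [i1, i2, hs2, sy2]
  have j2 : 0 ≤ 2 * c * k * w * (s ^ 2 + 1) := by positivity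
  nlinarith only [j1, j2, i1, i2, mul_nonneg i1 i2, hs2, sy2, mul_nonneg i2 (add_nonneg i1 i2), mul_pos (neg_pos.2 j1) (by linarith : 0 < s ^ 2 + 1)]

lemma left2 {B y : ℝ} (hB : 0 < B) (hB3 : B ≤ π / 3) (hy : y ∈ Set.Icc 0 B)
    (hc : sin (π / 3) * sin y = sin (2 * (π / 2) - 2 * (π / 3)) * sin (2 * B - 2 * y)) :
    Psi (π / 2) B (π / 3) y < 0 := by
  have hpi := pi_pos
  have e : 2 * (π / 2) - 2 * (π / 3) = π / 3 := by ring
  have s3 : 0 < sin (π / 3) := sin_pos_of_pos_of_lt_pi (by linarith) (by linarith)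
  rw [e] at hc
  have hs : sin y = sin (2 * B - 2 * y) := mul_left_cancel₀ s3.ne' hc
  have hyq : 2 * B - 2 * y = y := by
    have h0 := sin_sub_sin (2 * B - 2 * y) y
    rw [hs, sub_self] at h0
    have h1 : cos ((2 * B - 2 * y + y) / 2) ≠ 0 :=
      (cos_pos_of_mem_Ioo ⟨by linarith [hy.2], by linarith [hy.1]⟩).ne'
    have h2 : sin ((2 * B - 2 * y - y) / 2) = 0 := by
      rcases mul_eq_zero.1 h0.symm with h | h
      · linarith
      · exact absurd h h1
    have h3 := (sin_eq_zero_iff_of_lt_of_lt (by linarith [hy.1, hy.2]) (by linarith [hy.1, hy.2])).1 h2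
    linarith
  simp only [Psi, e, hyq, sin_pi_div_three, cos_pi_div_three]
  have cy : 1 / 2 < cos y := by
    rw [← cos_pi_div_three]
    exact cos_lt_cos_of_nonneg_of_le_pi hy.1 (by linarith) (by linarith)
  have cy1 := cos_le_one y
  have ty : sin y ^ 2 = 1 - cos y ^ 2 := by linarith [sin_sq_add_cos_sq y]
  have h34 : (√3 / 2) ^ 2 = 3 / 4 := by rw [div_pow, sq_sqrt (by norm_num)]; norm_num
  rw [ty, h34]
  generalize cos y = c at *
  have k1 : 4 / 9 * ((1 - c ^ 2) * (c + 1)) < c + 1 / 2 := by nlinarith only [cy, cy1, mul_nonneg (by linarith : 0 ≤ 1 - c) (by linarith : 0 ≤ c - 1/2)]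
  have k2 := mul_pos (by linarith : 0 < c - 1 / 2) (sub_pos.2 k1)
  linarith only [k2]

theorem stmt10 (a b : ℤ) (ha : 2 ≤ a) (hab : a < b)
    (h : ∀ α₁ ∈ alphaI a, f2 a b α₁ 0 > 0) :
    ∃! p : ℝ × ℝ, p ∈ Dom a b ∧ f1 a b p.1 p.2 = 0 ∧ f2 a b p.1 p.2 = 0 := by
  have hpi := pi_pos
  have ha' : (2:ℝ) ≤ a := by exact_mod_cast ha
  have hab' : (a:ℝ) < b := by exact_mod_cast hab
  have hb' : (3:ℝ) ≤ b := by exact_mod_cast (by omega : (3:ℤ) ≤ b)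
  obtain ⟨A, hAdef⟩ : ∃ A, A = π / (a:ℝ) := ⟨_, rfl⟩
  obtain ⟨B, hBdef⟩ : ∃ B, B = π / (b:ℝ) := ⟨_, rfl⟩
  have h2A : 2 * π / (a:ℝ) = 2 * A := by rw [hAdef]; ring
  have h2B : 2 * π / (b:ℝ) = 2 * B := by rw [hBdef]; ring
  have hB : 0 < B := by rw [hBdef]; positivity
  have hAB : B < A := by
    rw [hAdef, hBdef]; exact div_lt_div_of_pos_left hpi (by linarith) hab'
  have hA : A ≤ π / 2 := by
    rw [hAdef]; exact div_le_div_of_nonneg_left hpi.le (by norm_num) ha'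
  have hB3 : B ≤ π / 3 := by
    rw [hBdef]; exact div_le_div_of_nonneg_left hpi.le (by norm_num) hb'
  have hB4 : 3 ≤ a → B ≤ π / 4 := by
    intro h3
    rw [hBdef]
    exact div_le_div_of_nonneg_left hpi.le (by norm_num) (by exact_mod_cast (by omega : (4:ℤ) ≤ b))
  have hB4' : B ≤ π / 4 ∨ a = 2 := by
    rcases eq_or_lt_of_le ha with h2 | h2
    · right; exact h2.symm
    · left; exact hB4 (by omega)
  obtain ⟨lo, hI, hlo0, hloA, hlop, hlox, hlo2, hleft⟩ : ∃ lo : ℝ, alphaI a = Set.Icc lo A ∧ 0 ≤ lo ∧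
      lo ≤ A ∧ 2 * A - 2 * lo ≤ π / 2 ∧ 2 * A - lo ≤ 2 * π / 3 ∧ (a = 2 → lo = π / 3 ∧ A = π / 2) ∧
      (∀ y ∈ Set.Icc 0 B, sin lo * sin y = sin (2 * A - 2 * lo) * sin (2 * B - 2 * y) →
        Psi A B lo y < 0) := by
    by_cases h2 : a = 2
    · have hA2 : A = π / 2 := by rw [hAdef, h2]; norm_num
      refine ⟨π / 3, ?_, by linarith, by linarith, by linarith, by linarith, fun _ => ⟨rfl, hA2⟩, ?_⟩
      · simp only [alphaI, if_pos h2, hA2]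
      · rw [hA2]; intro y hy hc; exact left2 hB hB3 hy hc
    · by_cases h3 : a = 3
      · have hA3 : A = π / 3 := by rw [hAdef, h3]; norm_num
        refine ⟨π / 12, ?_, by linarith, by linarith, by linarith, by linarith,
          fun h => absurd h h2, ?_⟩
        · simp only [alphaI, if_neg h2, if_pos h3, hA3]
        · rw [hA3]; intro y hy hc; exact left3 hB (hB4 (by omega)) hy hc
      · have hA4 : A ≤ π / 4 := by
          rw [hAdef]
          exact div_le_div_of_nonneg_left hpi.le (by norm_num)
            (by exact_mod_cast (by omega : (4:ℤ) ≤ a))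
        refine ⟨0, ?_, by linarith, by linarith, by linarith, by linarith,
          fun h => absurd h h2, ?_⟩
        · simp only [alphaI, if_neg h2, if_neg h3, hAdef]
        · intro y hy hc; exact left4 hB hAB hA4 hy hc
  have hf1 : ∀ x y, f1 a b x y = 0 ↔
      (cos x ^ 2 + cos (2 * A - 2 * x) ^ 2 + cos y ^ 2 + 2 * cos x * cos (2 * A - 2 * x) * cos y - 1)
        * sin y ^ 2 = (cos x ^ 2 + cos y ^ 2 + cos (2 * B - 2 * y) ^ 2
          + 2 * cos x * cos y * cos (2 * B - 2 * y) - 1) * sin (2 * A - 2 * x) ^ 2 := by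
    intro x y
    simp only [f1, B00, B11, h2A, h2B]
    constructor <;> intro h <;> linarith only [h]
  have hf2 : ∀ x y, f2 a b x y = 0 ↔
      (cos x ^ 2 + cos y ^ 2 + cos (2 * B - 2 * y) ^ 2
          + 2 * cos x * cos y * cos (2 * B - 2 * y) - 1) * sin x ^ 2 =
      (cos x ^ 2 + cos (2 * A - 2 * x) ^ 2 + cos y ^ 2 + 2 * cos x * cos (2 * A - 2 * x) * cos y - 1)
        * sin (2 * B - 2 * y) ^ 2 := by
    intro x y
    simp only [f2, B00, B11, h2A, h2B]
    constructor <;> intro h <;> linarith only [h]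
  have hs1 : ∀ x ∈ Set.Icc lo A, 0 ≤ sin x := fun x hx =>
    sin_nonneg_of_nonneg_of_le_pi (by linarith [hx.1]) (by linarith [hx.2])
  have hs2 : ∀ x ∈ Set.Icc lo A, 0 ≤ sin (2 * A - 2 * x) := fun x hx =>
    sin_nonneg_of_nonneg_of_le_pi (by linarith [hx.2]) (by linarith [hx.1])
  have hs : ∀ x ∈ Set.Icc lo A, 0 < sin x + sin (2 * A - 2 * x) := by
    intro x hx
    have hx0 : 0 ≤ x := hlo0.trans hx.1
    rcases eq_or_lt_of_le hx0 with h | h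
    · have := sin_pos_of_pos_of_lt_pi (x := 2 * A - 2 * x) (by linarith) (by linarith [hx.1])
      linarith [hs1 x hx]
    · have := sin_pos_of_pos_of_lt_pi h (by linarith [hx.2])
      linarith [hs2 x hx]
  have hPA : 0 < Psi A B A 0 := by
    have h1 := h A (by rw [hI]; exact ⟨hloA, le_refl _⟩)
    simp only [f2, B00, B11, h2A, h2B] at h1
    simp only [Psi]
    have h2 : 2 * A - 2 * A = 0 := by ring
    rw [h2] at h1 ⊢
    simp only [sin_zero] at h1 ⊢
    linarith only [h1]
  obtain ⟨x, hx, y, hy, hc, hP⟩ := exists_on_curve hB hB3 hloA hs1 hs2 hs (Psi A B)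
    (by unfold Psi; fun_prop) hPA hleft
  have hz := zero_of_curve (hs x hx) (hs1 x hx) (hs2 x hx) hc hP
  have props : ∀ z : ℝ × ℝ, z ∈ Dom a b ∧ f1 a b z.1 z.2 = 0 ∧ f2 a b z.1 z.2 = 0 →
      z.1 ∈ Set.Icc lo A ∧ z.2 ∈ Set.Icc 0 B ∧ ∃ r : ℝ, 0 < r ∧ r < 1 ∧
        sin z.2 = r * sin (2 * A - 2 * z.1) ∧ sin (2 * B - 2 * z.2) = r * sin z.1 ∧
        2 * A - 2 * z.1 < 2 * B - 2 * z.2 ∧ 2 * B - 2 * z.2 < z.1 ∧ z.2 ≤ 2 * A - 2 * z.1 ∧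
        cos z.1 + cos z.2 * cos (2 * B - 2 * z.2) =
          r * (cos (2 * A - 2 * z.1) + cos z.1 * cos z.2) := by
    rintro ⟨u, v⟩ ⟨hD, e1, e2⟩
    simp only [Dom, Set.mem_prod, hI, ← hBdef] at hD
    obtain ⟨hu, hv⟩ := hD
    refine ⟨hu, hv, ?_⟩
    have hpq : 2 * A - 2 * u + (2 * B - 2 * v) ≤ π := by
      rcases hB4' with h4 | h4
      · linarith [hu.1, hv.1]
      · obtain ⟨l1, l2⟩ := hlo2 h4
        linarith [hu.1, hv.1]
    have hcase : B ≤ π / 4 ∨ π / 3 ≤ u := by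
      rcases hB4' with h4 | h4
      · exact Or.inl h4
      · right; rw [← (hlo2 h4).1]; exact hu.1
    exact sol_props hB hAB hA hB3 rfl rfl (hlo0.trans hu.1) hu.2 (by linarith [hu.1])
      (by linarith [hu.1]) hv.1 hv.2 hpq hcase rfl rfl ((hf1 u v).1 e1) ((hf2 u v).1 e2)
  have uniq : ∀ z w : ℝ × ℝ, (z ∈ Dom a b ∧ f1 a b z.1 z.2 = 0 ∧ f2 a b z.1 z.2 = 0) →
      (w ∈ Dom a b ∧ f1 a b w.1 w.2 = 0 ∧ f2 a b w.1 w.2 = 0) → ¬ z.1 < w.1 := by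
    intro z w hz hw hlt
    obtain ⟨z1, z2, r, r0, r1, a1, a2, a3, a4, a5, a6⟩ := props z hz
    obtain ⟨w1, w2, r', r0', r1', a1', a2', a3', a4', a5', a6'⟩ := props w hw
    exact uniq_lt hA hAB z2.1 w2.1 hlt w1.2 z2.2 w2.2 r0 r1' r0' a1 a2 a1' a2' a3 a4 a3' a4' a5 a6 a6'
  have uniq2 : ∀ z w : ℝ × ℝ, (z ∈ Dom a b ∧ f1 a b z.1 z.2 = 0 ∧ f2 a b z.1 z.2 = 0) →
      (w ∈ Dom a b ∧ f1 a b w.1 w.2 = 0 ∧ f2 a b w.1 w.2 = 0) → z.1 = w.1 → ¬ z.2 < w.2 := by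
    intro z w hz hw heq hlt
    obtain ⟨z1, z2, r, r0, r1, a1, a2, a3, a4, a5, a6⟩ := props z hz
    obtain ⟨w1, w2, r', r0', r1', a1', a2', a3', a4', a5', a6'⟩ := props w hw
    rw [← heq] at a1' a2'
    have s1 : sin z.2 < sin w.2 :=
      sin_lt_sin_of_lt_of_le_pi_div_two (by linarith [z2.1]) (by linarith [w2.2]) hlt
    have s2 : sin (2 * B - 2 * w.2) < sin (2 * B - 2 * z.2) :=
      sin_lt_sin_of_lt_of_le_pi_div_two (by linarith [w2.2]) (by linarith [z1.2]) (by linarith)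
    rw [a1, a1'] at s1
    rw [a2, a2'] at s2
    have t1 := lt_of_mul_lt_mul_right s1 (hs2 _ z1)
    have t2 := lt_of_mul_lt_mul_right s2 (hs1 _ z1)
    exact lt_asymm t1 t2
  have hsol : ((x, y) : ℝ × ℝ) ∈ Dom a b ∧ f1 a b (x, y).1 (x, y).2 = 0 ∧ f2 a b (x, y).1 (x, y).2 = 0 := by
    refine ⟨?_, (hf1 x y).2 hz.1, (hf2 x y).2 hz.2⟩
    simp only [Dom, Set.mem_prod, hI, ← hBdef]
    exact ⟨hx, hy⟩
  refine ⟨(x, y), hsol, ?_⟩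
  intro w hw
  have h1 : w.1 = x := le_antisymm (not_lt.1 (uniq _ _ hsol hw)) (not_lt.1 (uniq _ _ hw hsol))
  have h2 : w.2 = y := le_antisymm (not_lt.1 (uniq2 _ _ hsol hw h1.symm))
    (not_lt.1 (uniq2 _ _ hw hsol h1))
  exact Prod.ext h1 h2
end
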